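/- arXiv:2409.11048 — 7 statements merged into one kernel-verified Lean document; each statement's English description precedes it below -/
import Mathlib

section
/- Φ is a strictly increasing bijection from [0,w̄] onto [0,μ], where μ = ∫₀^{w̄} ξ g(ξ)dξ; its inverse Φ⁻¹ : [0,μ] → [0,w̄] is continuously differentiable with strictly positive derivative, its (right) derivative at 0 equals 2, and Φ⁻¹(ξ) > ξ for every ξ ∈ (0,μ]. -/
/-!
Extend `g` from `[0, w̄]` to a continuous positive function `h` on `ℝ`. The substitution `ξ = b t`
gives `∫₀ᵇ h = b B(b)` and `∫₀ᵇ ξ h(ξ) dξ = b² A(b)` with `B(b) = ∫₀¹ h(bt) dt` and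
`A(b) = ∫₀¹ t h(bt) dt`, both continuous, and `A < B`. Hence the conditional mean is
`Φ(b) = b A(b) / B(b)`, an expression without singularity at `0`, and `Φ(b) < b` for `b > 0`.
The quotient rule away from `0`, and the difference quotient at `0`, show that `Φ` has derivative
`h(b) (B(b) - A(b)) / B(b)²` on all of `ℝ`; this is continuous, positive, and equals `1/2` at `0`.
So `Φ` is strictly increasing, the intermediate value theorem gives its image, and the inverse
function theorem gives the derivative of its inverse.
-/

open MeasureTheory intervalIntegral Set Filter

/-- The rescaled mass `∫₀¹ h(bt) dt`, which equals `(1/b) ∫₀ᵇ h` for `b ≠ 0`. -/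
noncomputable def scaledMass (h : ℝ → ℝ) (b : ℝ) : ℝ := ∫ t in (0:ℝ)..1, h (b * t)

/-- The rescaled first moment `∫₀¹ t h(bt) dt`, which equals `(1/b²) ∫₀ᵇ ξ h(ξ) dξ` for `b ≠ 0`. -/
noncomputable def scaledMoment (h : ℝ → ℝ) (b : ℝ) : ℝ := ∫ t in (0:ℝ)..1, t * h (b * t)

/-- The conditional mean `(∫₀ᵇ ξ h(ξ) dξ) / ∫₀ᵇ h`, written so that it is regular at `b = 0`
and makes sense for all real `b`. -/
noncomputable def condMean (h : ℝ → ℝ) (b : ℝ) : ℝ := b * (scaledMoment h b / scaledMass h b)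

/-- The derivative of `condMean h`. -/
noncomputable def condMeanDeriv (h : ℝ → ℝ) (b : ℝ) : ℝ :=
  h b * (scaledMass h b - scaledMoment h b) / scaledMass h b ^ 2

theorem integral_eq_mul_scaledMass (h : ℝ → ℝ) (b : ℝ) :
    ∫ ξ in (0:ℝ)..b, h ξ = b * scaledMass h b := by
  simp [scaledMass]

theorem integral_eq_sq_mul_scaledMoment (h : ℝ → ℝ) (b : ℝ) :
    ∫ ξ in (0:ℝ)..b, ξ * h ξ = b ^ 2 * scaledMoment h b := by
  have := intervalIntegral.mul_integral_comp_mul_left (f := fun ξ => ξ * h ξ) (a := 0) (b := 1) b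
  simp only [mul_zero, mul_one, mul_assoc, intervalIntegral.integral_const_mul] at this
  rw [← this, scaledMoment]
  ring

theorem continuous_scaledMass {h : ℝ → ℝ} (hc : Continuous h) : Continuous (scaledMass h) :=
  intervalIntegral.continuous_parametric_intervalIntegral_of_continuous' (by fun_prop) 0 1

theorem continuous_scaledMoment {h : ℝ → ℝ} (hc : Continuous h) : Continuous (scaledMoment h) :=
  intervalIntegral.continuous_parametric_intervalIntegral_of_continuous' (by fun_prop) 0 1

theorem scaledMass_pos {h : ℝ → ℝ} (hc : Continuous h) (hp : ∀ x, 0 < h x) (b : ℝ) :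
    0 < scaledMass h b :=
  intervalIntegral.intervalIntegral_pos_of_pos
    (Continuous.intervalIntegrable (by fun_prop) _ _) (fun _ => hp _) one_pos

theorem scaledMoment_lt {h : ℝ → ℝ} (hc : Continuous h) (hp : ∀ x, 0 < h x) (b : ℝ) :
    scaledMoment h b < scaledMass h b := by
  have h1 : Continuous fun t => h (b * t) := by fun_prop
  have h2 : Continuous fun t => t * h (b * t) := by fun_prop
  rw [← sub_pos, scaledMass, scaledMoment, ← intervalIntegral.integral_sub
    (h1.intervalIntegrable _ _) (h2.intervalIntegrable _ _)]
  refine intervalIntegral.intervalIntegral_pos_of_pos_on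
    ((h1.sub h2).intervalIntegrable _ _) (fun t ht => ?_) one_pos
  nlinarith [hp (b * t), ht.2]

theorem condMeanDeriv_pos {h : ℝ → ℝ} (hc : Continuous h) (hp : ∀ x, 0 < h x) (b : ℝ) :
    0 < condMeanDeriv h b :=
  div_pos (mul_pos (hp b) (sub_pos.2 (scaledMoment_lt hc hp b))) (pow_pos (scaledMass_pos hc hp b) 2)

theorem continuous_condMeanDeriv {h : ℝ → ℝ} (hc : Continuous h) (hp : ∀ x, 0 < h x) :
    Continuous (condMeanDeriv h) :=
  (hc.mul ((continuous_scaledMass hc).sub (continuous_scaledMoment hc))).div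
    ((continuous_scaledMass hc).pow 2) fun b => (pow_pos (scaledMass_pos hc hp b) 2).ne'

theorem scaledMass_zero (h : ℝ → ℝ) : scaledMass h 0 = h 0 := by simp [scaledMass]

theorem scaledMoment_zero (h : ℝ → ℝ) : scaledMoment h 0 = h 0 / 2 := by
  simp [scaledMoment, intervalIntegral.integral_mul_const]
  ring

theorem condMeanDeriv_zero {h : ℝ → ℝ} (hp : ∀ x, 0 < h x) : condMeanDeriv h 0 = 1 / 2 := by
  have := (hp 0).ne'
  rw [condMeanDeriv, scaledMass_zero, scaledMoment_zero]
  field_simp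
  norm_num

/-- Multiplying the numerator and denominator by `b` recovers the ratio of integrals; at `b = 0`
both sides are `0`, because the right-hand side is `0 / 0`. -/
theorem condMean_eq_div (h : ℝ → ℝ) (b : ℝ) :
    condMean h b = (∫ ξ in (0:ℝ)..b, ξ * h ξ) / ∫ ξ in (0:ℝ)..b, h ξ := by
  rw [integral_eq_sq_mul_scaledMoment, integral_eq_mul_scaledMass, condMean]
  rcases eq_or_ne b 0 with rfl | hb
  · simp
  · rw [pow_two, mul_assoc, mul_div_mul_left _ _ hb, mul_div_assoc]

theorem hasDerivAt_condMean {h : ℝ → ℝ} (hc : Continuous h) (hp : ∀ x, 0 < h x) (b : ℝ) :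
    HasDerivAt (condMean h) (condMeanDeriv h b) b := by
  have hB := scaledMass_pos hc hp b
  rcases eq_or_ne b 0 with rfl | hb
  · -- The difference quotient of `b ↦ b * (A b / B b)` at `0` is `A b / B b`, which is continuous.
    have hq : Continuous fun b => scaledMoment h b / scaledMass h b :=
      (continuous_scaledMoment hc).div (continuous_scaledMass hc)
        fun b => (scaledMass_pos hc hp b).ne'
    have h0 : condMeanDeriv h 0 = scaledMoment h 0 / scaledMass h 0 := by
      have := (hp 0).ne'
      rw [condMeanDeriv_zero hp, scaledMass_zero, scaledMoment_zero]
      field_simp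
    rw [h0, hasDerivAt_iff_tendsto_slope]
    refine (hq.continuousAt.tendsto.mono_left nhdsWithin_le_nhds).congr' ?_
    filter_upwards [self_mem_nhdsWithin] with x hx
    have hx' : x ≠ 0 := hx
    simp only [slope_def_field, condMean, zero_mul, sub_zero]
    field_simp
  · have hN : HasDerivAt (fun b => ∫ ξ in (0:ℝ)..b, ξ * h ξ) (b * h b) b :=
      (continuous_id.mul hc).integral_hasStrictDerivAt 0 b |>.hasDerivAt
    have hG : HasDerivAt (fun b => ∫ ξ in (0:ℝ)..b, h ξ) (h b) b :=
      (hc.integral_hasStrictDerivAt 0 b).hasDerivAt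
    have hG0 : (∫ ξ in (0:ℝ)..b, h ξ) ≠ 0 := by
      rw [integral_eq_mul_scaledMass]
      exact mul_ne_zero hb hB.ne'
    have hd := hN.div hG hG0
    rw [show condMean h = _ from funext (condMean_eq_div h)]
    refine hd.congr_deriv ?_
    rw [integral_eq_sq_mul_scaledMoment, integral_eq_mul_scaledMass, condMeanDeriv]
    field_simp

theorem strictMono_condMean {h : ℝ → ℝ} (hc : Continuous h) (hp : ∀ x, 0 < h x) :
    StrictMono (condMean h) :=
  strictMono_of_hasDerivAt_pos (hasDerivAt_condMean hc hp) (condMeanDeriv_pos hc hp)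

theorem hasStrictDerivAt_invFun_condMean {h : ℝ → ℝ} (hc : Continuous h) (hp : ∀ x, 0 < h x)
    (b : ℝ) :
    HasStrictDerivAt (Function.invFun (condMean h)) (condMeanDeriv h b)⁻¹ (condMean h b) :=
  (hasStrictDerivAt_of_hasDerivAt_of_continuousAt
    (Eventually.of_forall (hasDerivAt_condMean hc hp))
    (continuous_condMeanDeriv hc hp).continuousAt).to_local_left_inverse
    (condMeanDeriv_pos hc hp b).ne'
    (Eventually.of_forall (Function.leftInverse_invFun (strictMono_condMean hc hp).injective))

theorem condMean_lt_self {h : ℝ → ℝ} (hc : Continuous h) (hp : ∀ x, 0 < h x) {b : ℝ}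
    (hb : 0 < b) : condMean h b < b :=
  mul_lt_of_lt_one_right hb ((div_lt_one (scaledMass_pos hc hp b)).2 (scaledMoment_lt hc hp b))

/-- `Φ` is a strictly increasing bijection from `[0, w̄]` onto `[0, μ]`,
where `μ = ∫₀^{w̄} ξ g(ξ) dξ`; its inverse `Ψ = Φ⁻¹ : [0, μ] → [0, w̄]` is continuously
differentiable with strictly positive derivative, its (right) derivative at `0` equals `2`,
and `Φ⁻¹(ξ) > ξ` for every `ξ ∈ (0, μ]`. -/
theorem stmt2
    (wbar : ℝ) (hwbar : 0 < wbar)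
    (g : ℝ → ℝ)
    (hg_cont : ContinuousOn g (Set.Icc 0 wbar))
    (hg_pos : ∀ x ∈ Set.Icc 0 wbar, 0 < g x)
    (hg_int : (∫ ξ in (0:ℝ)..wbar, g ξ) = 1)
    (G : ℝ → ℝ) (hG : ∀ b, G b = ∫ ξ in (0:ℝ)..b, g ξ)
    (Φ : ℝ → ℝ) (hΦ0 : Φ 0 = 0)
    (hΦ : ∀ b ∈ Set.Ioc 0 wbar, Φ b = (∫ ξ in (0:ℝ)..b, ξ * g ξ) / G b)
    (μ : ℝ) (hμ : μ = ∫ ξ in (0:ℝ)..wbar, ξ * g ξ) :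
    StrictMonoOn Φ (Set.Icc 0 wbar) ∧
    Φ '' Set.Icc 0 wbar = Set.Icc 0 μ ∧
    ∃ Ψ : ℝ → ℝ,
      (∀ b ∈ Set.Icc 0 wbar, Ψ (Φ b) = b) ∧
      (∀ ξ ∈ Set.Icc 0 μ, Ψ ξ ∈ Set.Icc 0 wbar ∧ Φ (Ψ ξ) = ξ) ∧
      (∃ D : ℝ → ℝ,
        ContinuousOn D (Set.Icc 0 μ) ∧ D 0 = 2 ∧
        ∀ ξ ∈ Set.Icc 0 μ, 0 < D ξ ∧ HasDerivWithinAt Ψ (D ξ) (Set.Icc 0 μ) ξ) ∧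
      (∀ ξ ∈ Set.Ioc 0 μ, ξ < Ψ ξ) := by
  -- The constant extension of `g` beyond the endpoints of `[0, w̄]`.
  set h : ℝ → ℝ := Set.IccExtend hwbar.le ((Set.Icc 0 wbar).domRestrict g) with hh
  have hc : Continuous h := hg_cont.domRestrict.Icc_extend'
  have hp : ∀ x, 0 < h x := fun x => hg_pos _ (Set.projIcc 0 wbar hwbar.le x).2
  have hgh : ∀ x ∈ Set.Icc 0 wbar, h x = g x := fun x hx => by
    rw [hh, Set.IccExtend_of_mem _ _ hx, Set.domRestrict_apply]
  have hsub : ∀ b ∈ Set.Icc 0 wbar, Set.uIcc 0 b ⊆ Set.Icc 0 wbar := fun b hb => by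
    rw [Set.uIcc_of_le hb.1]
    exact Set.Icc_subset_Icc_right hb.2
  have hmom : ∀ b ∈ Set.Icc 0 wbar, ∫ ξ in (0:ℝ)..b, ξ * g ξ = ∫ ξ in (0:ℝ)..b, ξ * h ξ :=
    fun b hb => intervalIntegral.integral_congr fun x hx => by
      simp only [hgh x (hsub b hb hx)]
  have hmass : ∀ b ∈ Set.Icc 0 wbar, ∫ ξ in (0:ℝ)..b, g ξ = ∫ ξ in (0:ℝ)..b, h ξ :=
    fun b hb => intervalIntegral.integral_congr fun x hx => (hgh x (hsub b hb hx)).symm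
  have hzero : condMean h 0 = 0 := zero_mul _
  have hΦh : Set.EqOn Φ (condMean h) (Set.Icc 0 wbar) := by
    intro b hb
    rcases hb.1.eq_or_lt with rfl | hb0
    · rw [hΦ0, hzero]
    · rw [hΦ b ⟨hb0, hb.2⟩, hG, hmom b hb, hmass b hb, condMean_eq_div]
  have hμh : condMean h wbar = μ := by
    have hw : wbar ∈ Set.Icc 0 wbar := ⟨hwbar.le, le_rfl⟩
    rw [condMean_eq_div, ← hmass wbar hw, ← hmom wbar hw, hg_int, div_one, hμ]
  have hmono := strictMono_condMean hc hp
  have hcont : Continuous (condMean h) :=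
    continuous_iff_continuousAt.2 fun b => (hasDerivAt_condMean hc hp b).continuousAt
  have himage : condMean h '' Set.Icc 0 wbar = Set.Icc 0 μ := by
    refine Set.Subset.antisymm ?_ ?_
    · rintro _ ⟨b, hb, rfl⟩
      exact ⟨hzero ▸ hmono.monotone hb.1, hμh ▸ hmono.monotone hb.2⟩
    · have := intermediate_value_Icc hwbar.le hcont.continuousOn
      rwa [hzero, hμh] at this
  set Ψ := Function.invFun (condMean h)
  have hΨ : ∀ b, Ψ (condMean h b) = b := Function.leftInverse_invFun hmono.injective
  have hrange : ∀ ξ ∈ Set.Icc 0 μ, ∃ b ∈ Set.Icc 0 wbar, condMean h b = ξ := fun ξ hξ => by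
    rwa [← himage] at hξ
  refine ⟨(hmono.strictMonoOn _).congr hΦh.symm, by rw [hΦh.image_eq, himage], Ψ,
    fun b hb => by rw [hΦh hb, hΨ], ?_, ⟨fun ξ => (condMeanDeriv h (Ψ ξ))⁻¹, ?_, ?_, ?_⟩, ?_⟩
  · intro ξ hξ
    obtain ⟨b, hb, rfl⟩ := hrange ξ hξ
    rw [hΨ]
    exact ⟨hb, hΦh hb⟩
  · intro ξ hξ
    obtain ⟨b, hb, rfl⟩ := hrange ξ hξ
    have hΨc : ContinuousAt Ψ (condMean h b) :=
      (hasStrictDerivAt_invFun_condMean hc hp b).hasDerivAt.continuousAt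
    exact (((continuous_condMeanDeriv hc hp).continuousAt.comp hΨc).inv₀
      (condMeanDeriv_pos hc hp _).ne').continuousWithinAt
  · have h0 : Ψ 0 = 0 := by simpa only [hzero] using hΨ 0
    simp only [h0, condMeanDeriv_zero hp]
    norm_num
  · intro ξ hξ
    obtain ⟨b, hb, rfl⟩ := hrange ξ hξ
    simp only [hΨ]
    exact ⟨inv_pos.2 (condMeanDeriv_pos hc hp b),
      (hasStrictDerivAt_invFun_condMean hc hp b).hasDerivAt.hasDerivWithinAt⟩
  · intro ξ hξ
    obtain ⟨b, hb, rfl⟩ := hrange ξ ⟨hξ.1.le, hξ.2⟩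
    rw [hΨ]
    exact condMean_lt_self hc hp (hmono.lt_iff_lt.1 (hzero.symm ▸ hξ.1))
end

section
/- For every β ∈ (1,2), the quantity H(βv, v) is well defined for all sufficiently small v > 0 (since Φ⁻¹(v)/v → 2 as v ↓ 0), and lim_{v↓0} H(βv, v) = (N−1)·(β/(β−1))·(1 − β/2). -/
/-!
A continuous density `h` satisfies `∫₀ᵇ ξᵏ h(ξ) dξ ~ h(0) bᵏ⁺¹ / (k + 1)` as `b ↓ 0`
(`tendsto_moment_div_pow`). Taking `k = 0` gives `F v ~ f(0) v` and `G b ~ g(0) b`; combining this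
with `k = 1` gives `Φ b ~ b / 2` (`tendsto_ratio_div`).

If `c ∈ (1/2, 1/β)`, then `Φ b < c b` for all small `b > 0`. As `v = Φ (Ψ v)`, having
`Ψ v ≤ β v` would give `v < c β v < v`; hence `β v < Ψ v` for small `v`. On that range
`H (β v) v = (N - 1) (f v / (F v / v)) ((G (β v) / (β v)) / g (β v)) β (1 - β Φ(β v) / (β v)) / (β - 1)`,
and each factor converges.
-/

open MeasureTheory intervalIntegral Set Filter

/-- Leading-order behaviour at `0` of the truncated `k`-th moment of a continuous density. -/
theorem tendsto_moment_div_pow {a : ℝ} (ha : 0 < a) {h : ℝ → ℝ}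
    (hc : ContinuousOn h (Set.Icc 0 a)) (k : ℕ) :
    Filter.Tendsto (fun b => (∫ ξ in (0:ℝ)..b, ξ ^ k * h ξ) / b ^ (k + 1))
      (nhdsWithin 0 (Set.Ioi 0)) (nhds (h 0 / (k + 1))) := by
  rw [Metric.tendsto_nhdsWithin_nhds]
  intro ε hε
  obtain ⟨δ, hδ, hh⟩ := Metric.continuousOn_iff.1 hc 0 ⟨le_rfl, ha.le⟩ (ε / 2) (half_pos hε)
  refine ⟨min δ a, lt_min hδ ha, ?_⟩
  intro b hb hbd
  have hb0 : 0 < b := hb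
  rw [Real.dist_eq, sub_zero, abs_of_pos hb0, lt_min_iff] at hbd
  have hcb : ContinuousOn h (Set.uIcc 0 b) := by
    rw [Set.uIcc_of_le hb0.le]
    exact hc.mono (Set.Icc_subset_Icc le_rfl hbd.2.le)
  have hi1 : IntervalIntegrable (fun ξ => ξ ^ k * h ξ) volume 0 b :=
    ((continuous_pow k).continuousOn.mul hcb).intervalIntegrable
  have hi2 : IntervalIntegrable (fun ξ => ξ ^ k * h 0) volume 0 b :=
    ((continuous_pow k).mul continuous_const).intervalIntegrable 0 b
  have hsub : (∫ ξ in (0:ℝ)..b, (ξ ^ k * h ξ - ξ ^ k * h 0)) =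
      (∫ ξ in (0:ℝ)..b, ξ ^ k * h ξ) - b ^ (k + 1) * (h 0 / (k + 1)) := by
    rw [intervalIntegral.integral_sub hi1 hi2, intervalIntegral.integral_mul_const, integral_pow]
    simp only [ne_eq, Nat.succ_ne_zero, not_false_eq_true, zero_pow, sub_zero]
    ring
  have hbound : ‖∫ ξ in (0:ℝ)..b, (ξ ^ k * h ξ - ξ ^ k * h 0)‖ ≤ b ^ k * (ε / 2) * |b - 0| := by
    apply intervalIntegral.norm_integral_le_of_norm_le_const
    intro x hx
    rw [Set.uIoc_of_le hb0.le] at hx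
    have h1 : |h x - h 0| < ε / 2 := by
      have := hh x ⟨hx.1.le, hx.2.trans hbd.2.le⟩
        (by rw [Real.dist_eq, sub_zero, abs_of_pos hx.1]; exact hx.2.trans_lt hbd.1)
      rwa [Real.dist_eq] at this
    rw [← mul_sub, Real.norm_eq_abs, abs_mul, abs_of_nonneg (pow_nonneg hx.1.le k)]
    have := hx.1.le
    have := hx.2
    gcongr
  rw [hsub, Real.norm_eq_abs, sub_zero, abs_of_pos hb0] at hbound
  have hp : 0 < b ^ (k + 1) := pow_pos hb0 _
  have heq : (∫ ξ in (0:ℝ)..b, ξ ^ k * h ξ) / b ^ (k + 1) - h 0 / (k + 1) =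
      ((∫ ξ in (0:ℝ)..b, ξ ^ k * h ξ) - b ^ (k + 1) * (h 0 / (k + 1))) / b ^ (k + 1) := by
    rw [sub_div, mul_div_cancel_left₀ _ hp.ne']
  rw [Real.dist_eq, heq, abs_div, abs_of_pos hp, div_lt_iff₀ hp]
  have : b ^ k * (ε / 2) * b = (ε / 2) * b ^ (k + 1) := by ring
  nlinarith

theorem tendsto_primitive_div {a : ℝ} (ha : 0 < a) {h : ℝ → ℝ}
    (hc : ContinuousOn h (Set.Icc 0 a)) :
    Filter.Tendsto (fun b => (∫ ξ in (0:ℝ)..b, h ξ) / b)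
      (nhdsWithin 0 (Set.Ioi 0)) (nhds (h 0)) := by
  simpa using tendsto_moment_div_pow ha hc 0

/-- The conditional mean of a positive continuous density on `[0, b]` is asymptotic to `b / 2`. -/
theorem tendsto_ratio_div {a : ℝ} (ha : 0 < a) {h : ℝ → ℝ}
    (hc : ContinuousOn h (Set.Icc 0 a)) (h0 : 0 < h 0) :
    Filter.Tendsto (fun b => (∫ ξ in (0:ℝ)..b, ξ * h ξ) / (∫ ξ in (0:ℝ)..b, h ξ) / b)
      (nhdsWithin 0 (Set.Ioi 0)) (nhds (1 / 2)) := by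
  have h1 := (tendsto_moment_div_pow ha hc 1).div (tendsto_primitive_div ha hc) h0.ne'
  have hl : h 0 / ((1 : ℕ) + 1) / h 0 = 1 / 2 := by
    push_cast
    field_simp
    norm_num
  rw [hl] at h1
  refine h1.congr' ?_
  filter_upwards [self_mem_nhdsWithin] with b hb
  have hb0 : b ≠ 0 := (ne_of_gt hb)
  simp only [pow_one, Pi.div_apply]
  rw [div_div_div_eq, div_div, show b ^ (1 + 1) * (∫ ξ in (0:ℝ)..b, h ξ) =
    (∫ ξ in (0:ℝ)..b, h ξ) * b * b by ring, mul_div_mul_right _ _ hb0]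

/-- For every `β ∈ (1,2)`, the quantity `H (β v) v` is well defined for all
sufficiently small `v > 0` (i.e. `β v ∈ (v, Φ⁻¹ v)`, since `Φ⁻¹(v)/v → 2` as `v ↓ 0`), and
`lim_{v↓0} H (β v) v = (N−1)·(β/(β−1))·(1 − β/2)`. -/
theorem stmt3
    (wbar vbar : ℝ) (hwbar : 0 < wbar) (hvbar : 0 < vbar)
    (g : ℝ → ℝ)
    (hg_cont : ContinuousOn g (Set.Icc 0 wbar))
    (hg_pos : ∀ x ∈ Set.Icc 0 wbar, 0 < g x)
    (hg_int : (∫ ξ in (0:ℝ)..wbar, g ξ) = 1)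
    (G : ℝ → ℝ) (hG : ∀ b, G b = ∫ ξ in (0:ℝ)..b, g ξ)
    (Φ : ℝ → ℝ) (hΦ0 : Φ 0 = 0)
    (hΦ : ∀ b ∈ Set.Ioc 0 wbar, Φ b = (∫ ξ in (0:ℝ)..b, ξ * g ξ) / G b)
    (f : ℝ → ℝ)
    (hf_cont : ContinuousOn f (Set.Icc 0 vbar))
    (hf_pos : ∀ x ∈ Set.Icc 0 vbar, 0 < f x)
    (hf_int : (∫ ξ in (0:ℝ)..vbar, f ξ) = 1)
    (F : ℝ → ℝ) (hF : ∀ v, F v = ∫ ξ in (0:ℝ)..v, f ξ)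
    (N : ℕ) (hN : 2 ≤ N)
    (μ : ℝ) (hμ : μ = ∫ ξ in (0:ℝ)..wbar, ξ * g ξ) (hμv : vbar ≤ μ)
    (Ψ : ℝ → ℝ)
    (hΨl : ∀ b ∈ Set.Icc 0 wbar, Ψ (Φ b) = b)
    (hΨr : ∀ ξ ∈ Set.Icc 0 μ, Ψ ξ ∈ Set.Icc 0 wbar ∧ Φ (Ψ ξ) = ξ)
    (H : ℝ → ℝ → ℝ)
    (hH : ∀ v ∈ Set.Ioc 0 vbar, ∀ b ∈ Set.Ioo v (Ψ v),
      H b v = (N - 1 : ℝ) * (f v / F v) * (G b / g b) * ((v - Φ b) / (b - v))) :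
    ∀ β ∈ Set.Ioo (1:ℝ) 2,
      (∃ δ ∈ Set.Ioc 0 vbar, ∀ v ∈ Set.Ioc 0 δ, β * v ∈ Set.Ioo v (Ψ v)) ∧
      Filter.Tendsto (fun v => H (β * v) v) (nhdsWithin 0 (Set.Ioi 0))
        (nhds ((N - 1 : ℝ) * (β / (β - 1)) * (1 - β / 2))) := by
  rintro β ⟨hβ1, hβ2⟩
  have hβ0 : 0 < β := by linarith
  have hg0 : 0 < g 0 := hg_pos 0 ⟨le_rfl, hwbar.le⟩
  have hf0 : 0 < f 0 := hf_pos 0 ⟨le_rfl, hvbar.le⟩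
  have hFlim : Tendsto (fun v => F v / v) (nhdsWithin 0 (Set.Ioi 0)) (nhds (f 0)) := by
    simpa only [hF] using tendsto_primitive_div hvbar hf_cont
  have hGlim : Tendsto (fun b => G b / b) (nhdsWithin 0 (Set.Ioi 0)) (nhds (g 0)) := by
    simpa only [hG] using tendsto_primitive_div hwbar hg_cont
  have hΦlim : Tendsto (fun b => Φ b / b) (nhdsWithin 0 (Set.Ioi 0)) (nhds (1 / 2)) := by
    refine (tendsto_ratio_div hwbar hg_cont hg0).congr' ?_
    filter_upwards [Ioc_mem_nhdsGT hwbar] with b hb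
    rw [hΦ b hb, hG]
  have hflim : Tendsto f (nhdsWithin 0 (Set.Ioi 0)) (nhds (f 0)) :=
    (hf_cont 0 ⟨le_rfl, hvbar.le⟩).mono_of_mem_nhdsWithin (Icc_mem_nhdsGT hvbar)
  have hglim : Tendsto g (nhdsWithin 0 (Set.Ioi 0)) (nhds (g 0)) :=
    (hg_cont 0 ⟨le_rfl, hwbar.le⟩).mono_of_mem_nhdsWithin (Icc_mem_nhdsGT hwbar)
  have hβlim : Tendsto (fun v => β * v) (nhdsWithin 0 (Set.Ioi 0)) (nhdsWithin 0 (Set.Ioi 0)) := by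
    refine tendsto_nhdsWithin_iff.2 ⟨?_, ?_⟩
    · have : Tendsto (fun v : ℝ => β * v) (nhds 0) (nhds (β * 0)) :=
        (continuous_const.mul continuous_id).tendsto 0
      rw [mul_zero] at this
      exact this.mono_left nhdsWithin_le_nhds
    · filter_upwards [self_mem_nhdsWithin] with v hv
      exact mul_pos hβ0 hv
  have hwd : ∃ δ ∈ Set.Ioc 0 vbar, ∀ v ∈ Set.Ioc 0 δ, β * v ∈ Set.Ioo v (Ψ v) := by
    have hhalf : 1 / 2 < 1 / β := one_div_lt_one_div_of_lt hβ0 hβ2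
    obtain ⟨c, hc1, hc2⟩ := exists_between hhalf
    have hcβ : c * β < 1 := (lt_div_iff₀ hβ0).1 hc2
    obtain ⟨η, hη, hηs⟩ := mem_nhdsGT_iff_exists_Ioc_subset.1 (hΦlim.eventually_lt_const hc1)
    have hη0 : 0 < η := hη
    refine ⟨min vbar (η / β), ⟨lt_min hvbar (div_pos hη0 hβ0), min_le_left _ _⟩, ?_⟩
    rintro v ⟨hv0, hv⟩
    have hvv : v ≤ vbar := hv.trans (min_le_left _ _)
    have hvη : v * β ≤ η := (le_div_iff₀ hβ0).1 (hv.trans (min_le_right _ _))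
    refine ⟨by nlinarith, ?_⟩
    by_contra hcon
    have hle : Ψ v ≤ β * v := not_lt.1 hcon
    obtain ⟨hmem, hΦΨ⟩ := hΨr v ⟨hv0.le, hvv.trans hμv⟩
    have hpos : 0 < Ψ v := by
      refine lt_of_le_of_ne hmem.1 fun h => ?_
      rw [← h, hΦ0] at hΦΨ
      exact hv0.ne hΦΨ
    have hlt : Φ (Ψ v) / Ψ v < c := hηs ⟨hpos, by linarith⟩
    rw [div_lt_iff₀ hpos, hΦΨ] at hlt
    nlinarith
  refine ⟨hwd, ?_⟩
  obtain ⟨δ, hδ, hwd⟩ := hwd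
  have hlim : Tendsto (fun v => (N - 1 : ℝ) * (f v / (F v / v)) *
      ((G (β * v) / (β * v)) / g (β * v) * β) * ((1 - β * (Φ (β * v) / (β * v))) / (β - 1)))
      (nhdsWithin 0 (Set.Ioi 0))
      (nhds ((N - 1 : ℝ) * (f 0 / f 0) * (g 0 / g 0 * β) * ((1 - β * (1 / 2)) / (β - 1)))) := by
    refine ((tendsto_const_nhds.mul (hflim.div hFlim hf0.ne')).mul
      ((((hGlim.comp hβlim).div (hglim.comp hβlim) hg0.ne')).mul_const β)).mul
      ((tendsto_const_nhds.sub ((hΦlim.comp hβlim).const_mul β)).div_const _)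
  have hval : (N - 1 : ℝ) * (f 0 / f 0) * (g 0 / g 0 * β) * ((1 - β * (1 / 2)) / (β - 1)) =
      (N - 1 : ℝ) * (β / (β - 1)) * (1 - β / 2) := by
    rw [div_self hf0.ne', div_self hg0.ne']
    ring
  rw [hval] at hlim
  refine hlim.congr' ?_
  filter_upwards [Ioc_mem_nhdsGT hδ.1] with v hv
  rw [hH v ⟨hv.1, hv.2.trans hδ.2⟩ (β * v) (hwd v hv)]
  have hv0 : v ≠ 0 := hv.1.ne'
  have hβ' : β ≠ 0 := hβ0.ne'
  have hβm : β - 1 ≠ 0 := by linarith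
  have e1 : f v / (F v / v) = f v / F v * v := div_div_eq_mul_div _ _ _ |>.trans (by ring)
  have e2 : G (β * v) / (β * v) / g (β * v) * β = G (β * v) / g (β * v) / v := by
    rw [div_right_comm, div_mul_eq_mul_div, mul_comm β v, mul_div_mul_right _ _ hβ']
  have e3 : (1 - β * (Φ (β * v) / (β * v))) / (β - 1) = (v - Φ (β * v)) / (β * v - v) := by
    rw [show β * v - v = (β - 1) * v by ring]
    field_simp
  rw [e1, e2, e3]
  field_simp
end

section
/- If in addition g is continuously differentiable on [0,w̄], then there exists δ₁ ∈ (0,v̄] such that for every v ∈ (0,δ₁], the map β ↦ H(βv, v) is strictly decreasing on the interval (1, Φ⁻¹(v)/v). -/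
open MeasureTheory intervalIntegral Set Filter

/-!
Write `A_v(b) = ∫₀ᵇ (v - ξ) g(ξ) dξ = v G(b) - ∫₀ᵇ ξ g(ξ) dξ`. Up to the positive constant
`(N - 1) f(v) / F(v)`, `H b v` equals `A_v(b) / (g(b) (b - v))`.

* The numerator is strictly decreasing on `[v, w̄]` (`momentGap_lt`), since its integrand is
  negative beyond `v`. It vanishes at `Φ⁻¹(v)`, hence is positive on `(v, Φ⁻¹(v))`.
* The denominator is positive and strictly increasing as long as `b` stays below a constant `ε`
  with `ε · sup |g'| < inf g` (`mul_sub_strictMono_of_lipschitz`): the growth of `b - v` then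
  outweighs any decrease of `g`.

It remains to force `Φ⁻¹(v) ≤ ε`. If `ε < Φ⁻¹(v)` with `v ≤ ε`, then `A_v(ε) > 0`, that is,
`v > (∫₀^ε ξ g) / G(ε)`, which is impossible once `v` is small.
-/

/-- The integrand `(v - ξ) g(ξ)` is negative for `ξ > v`, so its primitive is strictly decreasing
on `[v, w]`. -/
lemma momentGap_lt {w v : ℝ} {g : ℝ → ℝ} (hg : ContinuousOn g (Icc 0 w))
    (hpos : ∀ x ∈ Icc 0 w, 0 < g x) (hv : 0 ≤ v) {b₁ b₂ : ℝ} (h1 : v ≤ b₁) (h12 : b₁ < b₂)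
    (h2 : b₂ ≤ w) :
    v * (∫ ξ in (0:ℝ)..b₂, g ξ) - (∫ ξ in (0:ℝ)..b₂, ξ * g ξ)
      < v * (∫ ξ in (0:ℝ)..b₁, g ξ) - (∫ ξ in (0:ℝ)..b₁, ξ * g ξ) := by
  have hi : ∀ a c : ℝ, 0 ≤ a → a ≤ c → c ≤ w → IntervalIntegrable g volume a c :=
    fun a c ha hac hc => (hg.mono (Icc_subset_Icc ha hc)).intervalIntegrable_of_Icc hac
  have hi' : ∀ a c : ℝ, 0 ≤ a → a ≤ c → c ≤ w →
      IntervalIntegrable (fun ξ => ξ * g ξ) volume a c :=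
    fun a c ha hac hc => ((continuousOn_id.mul hg).mono
      (Icc_subset_Icc ha hc)).intervalIntegrable_of_Icc hac
  have e1 := integral_add_adjacent_intervals (hi 0 b₁ le_rfl (by linarith) (by linarith))
    (hi b₁ b₂ (by linarith) h12.le h2)
  have e2 := integral_add_adjacent_intervals (hi' 0 b₁ le_rfl (by linarith) (by linarith))
    (hi' b₁ b₂ (by linarith) h12.le h2)
  have i1 := hi b₁ b₂ (by linarith) h12.le h2
  have i2 := hi' b₁ b₂ (by linarith) h12.le h2
  have hp : 0 < ∫ ξ in b₁..b₂, (ξ * g ξ - v * g ξ) := by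
    refine intervalIntegral_pos_of_pos_on (i2.sub (i1.const_mul v)) (fun x hx => ?_) h12
    have := hpos x ⟨by linarith [hx.1], by linarith [hx.2]⟩
    nlinarith [hx.1]
  rw [integral_sub i2 (i1.const_mul v), intervalIntegral.integral_const_mul] at hp
  rw [← e1, ← e2]
  linarith

/-- If `g ≥ m` is `L`-Lipschitz along the pair `b₁ < b₂` and `L ε < m`, then `b ↦ g(b) (b - v)`
increases from `b₁` to `b₂` as long as `0 ≤ v ≤ b₁ ≤ ε`. -/
lemma mul_sub_strictMono_of_lipschitz {g : ℝ → ℝ} {m L ε v b₁ b₂ : ℝ} (hL : 0 ≤ L)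
    (hε : L * ε < m) (hv : 0 ≤ v) (h1 : v ≤ b₁) (h12 : b₁ < b₂) (h1ε : b₁ ≤ ε)
    (hm : m ≤ g b₂) (hlip : |g b₂ - g b₁| ≤ L * (b₂ - b₁)) :
    g b₁ * (b₁ - v) < g b₂ * (b₂ - v) := by
  have hl := (abs_le.mp hlip).1
  have hd : 0 < b₂ - b₁ := sub_pos.2 h12
  have p1 : 0 ≤ (g b₂ - g b₁ + L * (b₂ - b₁)) * (b₁ - v) :=
    mul_nonneg (by linarith) (by linarith)
  have p2 : L * (b₂ - b₁) * (b₁ - v) ≤ L * (b₂ - b₁) * ε :=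
    mul_le_mul_of_nonneg_left (by linarith) (mul_nonneg hL hd.le)
  have p3 : 0 < (g b₂ - L * ε) * (b₂ - b₁) := mul_pos (by linarith) hd
  linarith

/-- If in addition `g` is continuously differentiable on `[0, w̄]`, then
there exists `δ₁ ∈ (0, v̄]` such that for every `v ∈ (0, δ₁]`, the map `β ↦ H (β v) v` is
strictly decreasing on the interval `(1, Φ⁻¹(v)/v)`. -/
theorem stmt4
    (wbar vbar : ℝ) (hwbar : 0 < wbar) (hvbar : 0 < vbar)
    (g : ℝ → ℝ)
    (hg_cont : ContinuousOn g (Set.Icc 0 wbar))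
    (hg_pos : ∀ x ∈ Set.Icc 0 wbar, 0 < g x)
    (hg_int : (∫ ξ in (0:ℝ)..wbar, g ξ) = 1)
    (g' : ℝ → ℝ)
    (hg'_cont : ContinuousOn g' (Set.Icc 0 wbar))
    (hg' : ∀ x ∈ Set.Icc 0 wbar, HasDerivWithinAt g (g' x) (Set.Icc 0 wbar) x)
    (G : ℝ → ℝ) (hG : ∀ b, G b = ∫ ξ in (0:ℝ)..b, g ξ)
    (Φ : ℝ → ℝ) (hΦ0 : Φ 0 = 0)
    (hΦ : ∀ b ∈ Set.Ioc 0 wbar, Φ b = (∫ ξ in (0:ℝ)..b, ξ * g ξ) / G b)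
    (f : ℝ → ℝ)
    (hf_cont : ContinuousOn f (Set.Icc 0 vbar))
    (hf_pos : ∀ x ∈ Set.Icc 0 vbar, 0 < f x)
    (hf_int : (∫ ξ in (0:ℝ)..vbar, f ξ) = 1)
    (F : ℝ → ℝ) (hF : ∀ v, F v = ∫ ξ in (0:ℝ)..v, f ξ)
    (N : ℕ) (hN : 2 ≤ N)
    (μ : ℝ) (hμ : μ = ∫ ξ in (0:ℝ)..wbar, ξ * g ξ) (hμv : vbar ≤ μ)
    (Ψ : ℝ → ℝ)
    (hΨl : ∀ b ∈ Set.Icc 0 wbar, Ψ (Φ b) = b)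
    (hΨr : ∀ ξ ∈ Set.Icc 0 μ, Ψ ξ ∈ Set.Icc 0 wbar ∧ Φ (Ψ ξ) = ξ)
    (H : ℝ → ℝ → ℝ)
    (hH : ∀ v ∈ Set.Ioc 0 vbar, ∀ b ∈ Set.Ioo v (Ψ v),
      H b v = (N - 1 : ℝ) * (f v / F v) * (G b / g b) * ((v - Φ b) / (b - v))) :
    ∃ δ₁ ∈ Set.Ioc 0 vbar, ∀ v ∈ Set.Ioc 0 δ₁,
      StrictAntiOn (fun β => H (β * v) v) (Set.Ioo 1 (Ψ v / v)) := by
  obtain ⟨x₀, hx₀, hmin⟩ := isCompact_Icc.exists_isMinOn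
    (nonempty_Icc.2 hwbar.le) hg_cont
  have hm0 := hg_pos x₀ hx₀
  set m := g x₀
  have hm : ∀ x ∈ Icc 0 wbar, m ≤ g x := fun x hx => hmin hx
  obtain ⟨L, hL⟩ := isCompact_Icc.exists_bound_of_continuousOn hg'_cont
  have hL0 : 0 ≤ L := (norm_nonneg _).trans (hL 0 ⟨le_rfl, hwbar.le⟩)
  have hlip : ∀ x ∈ Icc 0 wbar, ∀ y ∈ Icc 0 wbar, x < y → |g y - g x| ≤ L * (y - x) := by
    intro x hx y hy hxy
    have := (convex_Icc (0:ℝ) wbar).norm_image_sub_le_of_norm_hasDerivWithin_le hg' hL hx hy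
    rwa [Real.norm_eq_abs, Real.norm_eq_abs, abs_of_pos (sub_pos.2 hxy)] at this
  obtain ⟨ε, hε0, hεw, hεL⟩ : ∃ ε : ℝ, 0 < ε ∧ ε ≤ wbar ∧ L * ε < m := by
    refine ⟨min wbar (m / (L + 1)), lt_min hwbar (by positivity), min_le_left _ _, ?_⟩
    have h1 : min wbar (m / (L + 1)) ≤ m / (L + 1) := min_le_right _ _
    rw [le_div_iff₀ (by linarith)] at h1
    have h0 : 0 < min wbar (m / (L + 1)) := lt_min hwbar (by positivity)
    linarith
  have hGpos : ∀ b ∈ Ioc 0 wbar, 0 < G b := by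
    intro b hb
    rw [hG]
    exact intervalIntegral_pos_of_pos_on
      ((hg_cont.mono (Icc_subset_Icc le_rfl hb.2)).intervalIntegrable_of_Icc hb.1.le)
      (fun x hx => hg_pos x ⟨hx.1.le, hx.2.le.trans hb.2⟩) hb.1
  have hMpos : 0 < ∫ ξ in (0:ℝ)..ε, ξ * g ξ :=
    intervalIntegral_pos_of_pos_on
      (((continuousOn_id.mul hg_cont).mono
        (Icc_subset_Icc le_rfl hεw)).intervalIntegrable_of_Icc hε0.le)
      (fun x hx => mul_pos hx.1 (hg_pos x ⟨hx.1.le, hx.2.le.trans hεw⟩)) hε0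
  have hGε := hGpos ε ⟨hε0, hεw⟩
  have hr0 : 0 < (∫ ξ in (0:ℝ)..ε, ξ * g ξ) / G ε := div_pos hMpos hGε
  refine ⟨min vbar (min ε ((∫ ξ in (0:ℝ)..ε, ξ * g ξ) / G ε)),
    ⟨lt_min hvbar (lt_min hε0 hr0), min_le_left _ _⟩, ?_⟩
  rintro v ⟨hv0, hvδ⟩
  obtain ⟨hvv, hvδ'⟩ := le_min_iff.1 hvδ
  obtain ⟨hvε, hvr⟩ := le_min_iff.1 hvδ'
  rw [le_div_iff₀ hGε] at hvr
  obtain ⟨hΨmem, hΦΨ⟩ := hΨr v ⟨hv0.le, hvv.trans hμv⟩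
  -- `v ≠ 0 = Φ 0`, so the preimage of `v` is not `0`.
  have hΨ0 : 0 < Ψ v := by
    refine lt_of_le_of_ne hΨmem.1 fun h => ?_
    rw [← h, hΦ0] at hΦΨ
    exact hv0.ne hΦΨ
  have hzero : v * (∫ ξ in (0:ℝ)..Ψ v, g ξ) - (∫ ξ in (0:ℝ)..Ψ v, ξ * g ξ) = 0 := by
    have hGΨ := hGpos _ ⟨hΨ0, hΨmem.2⟩
    rw [hΦ _ ⟨hΨ0, hΨmem.2⟩, div_eq_iff hGΨ.ne'] at hΦΨ
    rw [← hG, hΦΨ, sub_self]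
  have hgap : ∀ b₁ b₂ : ℝ, v ≤ b₁ → b₁ < b₂ → b₂ ≤ wbar → _ := fun b₁ b₂ h1 h12 h2 =>
    momentGap_lt hg_cont hg_pos hv0.le h1 h12 h2
  have hΨε : Ψ v ≤ ε := by
    by_contra! h
    have := hgap ε (Ψ v) hvε h hΨmem.2
    rw [hzero, ← hG] at this
    linarith
  have hFpos : 0 < F v := by
    rw [hF]
    exact intervalIntegral_pos_of_pos_on
      ((hf_cont.mono (Icc_subset_Icc le_rfl hvv)).intervalIntegrable_of_Icc hv0.le)
      (fun x hx => hf_pos x ⟨hx.1.le, hx.2.le.trans hvv⟩) hv0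
  have hC : 0 < (N - 1 : ℝ) * (f v / F v) := by
    have hN' : (2:ℝ) ≤ N := by exact_mod_cast hN
    exact mul_pos (by linarith) (div_pos (hf_pos v ⟨hv0.le, hvv⟩) hFpos)
  have hform : ∀ b ∈ Ioo v (Ψ v), H b v = (N - 1 : ℝ) * (f v / F v) *
      ((v * (∫ ξ in (0:ℝ)..b, g ξ) - (∫ ξ in (0:ℝ)..b, ξ * g ξ)) / (g b * (b - v))) := by
    intro b hb
    have hb0 : 0 < b := hv0.trans hb.1
    have hbw : b ≤ wbar := hb.2.le.trans hΨmem.2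
    have hGb := hGpos b ⟨hb0, hbw⟩
    have hgb := hg_pos b ⟨hb0.le, hbw⟩
    have hbv : 0 < b - v := sub_pos.2 hb.1
    rw [hH v ⟨hv0, hvv⟩ b hb, hΦ b ⟨hb0, hbw⟩, ← hG b, mul_assoc]
    congr 1
    field_simp
  have hmaps : ∀ β ∈ Ioo 1 (Ψ v / v), β * v ∈ Ioo v (Ψ v) := fun β hβ =>
    ⟨by nlinarith [hβ.1], (lt_div_iff₀ hv0).1 hβ.2⟩
  intro β₁ hβ₁ β₂ hβ₂ hβ
  have hb12 : β₁ * v < β₂ * v := mul_lt_mul_of_pos_right hβ hv0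
  have hb₁ := hmaps β₁ hβ₁
  have hb₂ := hmaps β₂ hβ₂
  have hmem : ∀ b ∈ Ioo v (Ψ v), b ∈ Icc 0 wbar := fun b hb =>
    ⟨(hv0.trans hb.1).le, hb.2.le.trans hΨmem.2⟩
  simp only [hform _ hb₁, hform _ hb₂]
  generalize β₁ * v = b₁ at *
  generalize β₂ * v = b₂ at *
  refine mul_lt_mul_of_pos_left ?_ hC
  have hA₁ := hgap b₁ b₂ hb₁.1.le hb12 (hmem _ hb₂).2
  have hA₂ := hgap b₂ (Ψ v) hb₂.1.le hb₂.2 hΨmem.2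
  rw [hzero] at hA₂
  have hD := mul_sub_strictMono_of_lipschitz hL0 hεL hv0.le hb₁.1.le hb12 (hb₁.2.le.trans hΨε)
    (hm _ (hmem _ hb₂)) (hlip _ (hmem _ hb₁) _ (hmem _ hb₂) hb12)
  exact div_lt_div₀ hA₁ hD.le (hA₂.trans hA₁).le
    (mul_pos (hg_pos _ (hmem _ hb₁)) (sub_pos.2 hb₁.1))
end

section
/- If in addition g is continuously differentiable on [0,w̄], then there exist δ̂ ∈ (0,v̄] and a continuous function b : [0,δ̂] → ℝ with b(0) = 0 such that b is differentiable on (0,δ̂] with b'(v) = H(b(v), v) for all v ∈ (0,δ̂], satisfies v < b(v) < Φ⁻¹(v) for all v ∈ (0,δ̂], and lim_{v↓0} b(v)/v = 2N/(N+1). -/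
open MeasureTheory intervalIntegral Set Filter

/-!
Put `b(v) = v x(v)`. With the averages `wavg n h v = ∫₀¹ sⁿ h(s v) ds` one has `F v = v wavg 0 f v`,
`G b = b wavg 0 g b` and `∫₀ᵇ ξ g = b² wavg 1 g b`, so the equation `b' = H(b, v)` becomes
`v x' = φ(v, x)` with `φ = blowup (N - 1) f g` continuous up to `v = 0`. Its limit is
`φ(0, x) = (N - 1) x (1 - x/2) / (x - 1) - x`, which vanishes at `x₀ = 2N/(N+1) ∈ (1, 2)`.
Since `g` is `C¹`, the derivative `φ_x` is continuous near `(0, x₀)`, and it is negative at that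
point (`blowupDeriv_zero_neg`).

Hence, for a natural number `n` large enough, `R(v, x) = (n + 1) x + φ(v, x)` is Lipschitz in `x`
near `x₀` with a constant `K < n + 1`. The equation `v x' = R(v, x) - (n + 1) x` has the integral
form `x(v) = ∫₀¹ sⁿ R(s v, x(s v)) ds`, whose right-hand side is a contraction with factor
`K / (n + 1)` on bounded continuous functions (`exists_wavg_fixedPoint`); the factor `s` in place of
`t / v` makes continuity at `0` automatic. At `v = 0` the fixed point satisfies `φ(0, x(0)) = 0`,
so `x(0) = x₀` (`exists_singular_solution`), which gives the limit of `b(v)/v`.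

Near `0`, `v < b(v)` because `x > 1`, and `Φ(b(v)) < v` because `Φ(b)/v → x₀/2 < 1`; the latter
means `b(v) < Φ⁻¹(v)` by the monotonicity of `w ↦ ∫₀ʷ (v - ξ) g` beyond `v`
(`lt_of_integral_pos`).
-/

/-! ### Weighted averages -/

/-- The weighted average `∫₀¹ sⁿ h(s v) ds`, which equals `v⁻⁽ⁿ⁺¹⁾ ∫₀ᵛ tⁿ h(t) dt` for `v ≠ 0`
and, unlike the latter expression, also makes sense at `v = 0`. -/
noncomputable def wavg (n : ℕ) (h : ℝ → ℝ) (v : ℝ) : ℝ := ∫ s in (0:ℝ)..1, s ^ n * h (s * v)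

lemma wavg_continuous (n : ℕ) {h : ℝ → ℝ} (hh : Continuous h) : Continuous (wavg n h) := by
  unfold wavg
  apply intervalIntegral.continuous_parametric_intervalIntegral_of_continuous'
  fun_prop

lemma wavg_zero (n : ℕ) (h : ℝ → ℝ) : wavg n h 0 = h 0 / (n + 1) := by
  simp [wavg, integral_pow]
  ring

lemma pow_mul_wavg (n : ℕ) (h : ℝ → ℝ) (v : ℝ) :
    v ^ (n + 1) * wavg n h v = ∫ t in (0:ℝ)..v, t ^ n * h t := by
  have h1 := intervalIntegral.mul_integral_comp_mul_right (a := 0) (b := 1)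
    (f := fun t => t ^ n * h t) v
  simp only [zero_mul, one_mul] at h1
  rw [← h1, wavg, pow_succ', mul_assoc, ← intervalIntegral.integral_const_mul]
  congr 1
  apply intervalIntegral.integral_congr
  intro s _
  simp only [mul_pow]
  ring

/-- `wavg n h` solves the linear singular equation `v y' = h - (n + 1) y`. -/
lemma wavg_hasDerivAt (n : ℕ) {h : ℝ → ℝ} (hh : Continuous h) {v : ℝ} (hv : v ≠ 0) :
    HasDerivAt (wavg n h) ((h v - (n + 1) * wavg n h v) / v) v := by
  have hI : HasDerivAt (fun v => ∫ t in (0:ℝ)..v, t ^ n * h t) (v ^ n * h v) v := by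
    have hc : Continuous fun t => t ^ n * h t := by fun_prop
    exact hc.integral_hasStrictDerivAt 0 v |>.hasDerivAt
  have hq := hI.div (hasDerivAt_pow (n + 1) v) (pow_ne_zero _ hv)
  have hev : wavg n h =ᶠ[nhds v] fun v => (∫ t in (0:ℝ)..v, t ^ n * h t) / v ^ (n + 1) := by
    filter_upwards [isOpen_ne.mem_nhds hv] with w hw
    rw [← pow_mul_wavg, mul_div_cancel_left₀ _ (pow_ne_zero _ hw)]
  refine (hq.congr_of_eventuallyEq hev).congr_deriv ?_
  rw [← pow_mul_wavg]
  rw [Nat.add_sub_cancel]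
  push_cast
  field_simp
  ring

lemma wavg_pos (n : ℕ) {h : ℝ → ℝ} (hh : Continuous h) (hpos : ∀ x, 0 < h x) (v : ℝ) :
    0 < wavg n h v := by
  apply intervalIntegral.intervalIntegral_pos_of_pos_on
  · exact Continuous.intervalIntegrable (by fun_prop) _ _
  · intro s hs
    have := pow_pos hs.1 n
    have := hpos (s * v)
    positivity
  · norm_num

lemma wavg_abs_le (n : ℕ) {h : ℝ → ℝ} {C : ℝ} (hC : ∀ x, |h x| ≤ C) (v : ℝ) :
    |wavg n h v| ≤ C / (n + 1) := by
  have h1 : ‖∫ s in (0:ℝ)..1, s ^ n * h (s * v)‖ ≤ ∫ s in (0:ℝ)..1, s ^ n * C := by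
    apply intervalIntegral.norm_integral_le_of_norm_le (by norm_num)
    · refine Eventually.of_forall fun s hs => ?_
      rw [norm_mul, norm_pow, Real.norm_of_nonneg hs.1.le]
      exact mul_le_mul_of_nonneg_left (hC _) (pow_nonneg hs.1.le n)
    · exact Continuous.intervalIntegrable (by fun_prop) _ _
  rw [Real.norm_eq_abs] at h1
  refine h1.trans (le_of_eq ?_)
  simp [intervalIntegral.integral_mul_const, integral_pow]
  ring

lemma wavg_sub (n : ℕ) {h k : ℝ → ℝ} (hh : Continuous h) (hk : Continuous k) (v : ℝ) :
    wavg n h v - wavg n k v = wavg n (fun t => h t - k t) v := by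
  unfold wavg
  rw [← intervalIntegral.integral_sub]
  · apply intervalIntegral.integral_congr
    intro s _
    simp only
    ring
  all_goals exact Continuous.intervalIntegrable (by fun_prop) _ _

/-! ### Singular Cauchy problems -/

/-- The integral form of `v u' = R v u - (n + 1) u` is a contraction for the sup norm as soon as
`R` is Lipschitz in `u` with constant below `n + 1`. -/
lemma exists_wavg_fixedPoint (n : ℕ) (R : ℝ → ℝ → ℝ) (hR : Continuous fun p : ℝ × ℝ => R p.1 p.2)
    (C K : ℝ) (hC : ∀ v x, |R v x| ≤ C) (hK0 : 0 ≤ K) (hKn : K < n + 1)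
    (hK : ∀ v x y, |R v x - R v y| ≤ K * |x - y|) :
    ∃ u : ℝ → ℝ, Continuous u ∧ ∀ v, u v = wavg n (fun t => R t (u t)) v := by
  have hn : (0:ℝ) < n + 1 := by positivity
  have hcomp : ∀ u : ℝ → ℝ, Continuous u → Continuous fun t => R t (u t) := fun u hu =>
    hR.comp (continuous_id.prodMk hu)
  let T : BoundedContinuousFunction ℝ ℝ → BoundedContinuousFunction ℝ ℝ := fun u =>
    BoundedContinuousFunction.ofNormedAddCommGroup (wavg n (fun t => R t (u t)))
      (wavg_continuous n (hcomp u u.continuous)) (C / (n + 1))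
      (fun v => wavg_abs_le n (fun t => hC _ _) v)
  have hT : ContractingWith (Real.toNNReal (K / (n + 1))) T := by
    constructor
    · rw [Real.toNNReal_lt_one, div_lt_one hn]
      exact hKn
    · apply LipschitzWith.of_dist_le_mul
      intro u w
      rw [Real.coe_toNNReal _ (by positivity)]
      rw [BoundedContinuousFunction.dist_le (by positivity)]
      intro v
      change |wavg n (fun t => R t (u t)) v - wavg n (fun t => R t (w t)) v| ≤ _
      rw [wavg_sub n (hcomp u u.continuous) (hcomp w w.continuous), div_mul_eq_mul_div]
      apply wavg_abs_le
      intro t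
      refine (hK _ _ _).trans (mul_le_mul_of_nonneg_left ?_ hK0)
      exact BoundedContinuousFunction.dist_coe_le_dist (f := u) (g := w) t
  let u : BoundedContinuousFunction ℝ ℝ := ContractingWith.fixedPoint T hT
  have hu : T u = u := hT.fixedPoint_isFixedPt
  exact ⟨u, u.continuous, fun v => (DFunLike.congr_fun hu v).symm⟩

/-- A singular Cauchy problem `v u' = φ(v, u)`, `u 0 = x₀` at an attracting zero `x₀` of `φ(0, ·)`:
if `φ_x` is continuous near `(0, x₀)` and negative at that point, a solution continuous up to `0`
exists. -/
lemma exists_singular_solution (φ D : ℝ → ℝ → ℝ) (x₀ δ₀ η₀ : ℝ) (hδ₀ : 0 < δ₀) (hη₀ : 0 < η₀)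
    (hφ : ContinuousOn (fun p : ℝ × ℝ => φ p.1 p.2)
      (Set.Icc 0 δ₀ ×ˢ Set.Icc (x₀ - η₀) (x₀ + η₀)))
    (hD : ∀ v ∈ Set.Icc 0 δ₀, ∀ x ∈ Set.Icc (x₀ - η₀) (x₀ + η₀),
      HasDerivAt (φ v) (D v x) x)
    (hDc : ContinuousAt (fun p : ℝ × ℝ => D p.1 p.2) (0, x₀))
    (hD0 : D 0 x₀ < 0) (hφ0 : φ 0 x₀ = 0) :
    ∃ u : ℝ → ℝ, Continuous u ∧ u 0 = x₀ ∧
      ∀ᶠ v in nhdsWithin 0 (Set.Ioi 0), HasDerivAt u (φ v (u v) / v) v := by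
  -- a box on which the derivative stays in `(3/2 * D 0 x₀, 1/2 * D 0 x₀)`
  obtain ⟨ε, hε, hball⟩ := Metric.continuousAt_iff.1 hDc (-(D 0 x₀) / 2) (by linarith)
  obtain ⟨r, hr, hrδ, hrη, hrε⟩ : ∃ r > 0, r ≤ δ₀ ∧ r ≤ η₀ ∧ r < ε :=
    ⟨min (min δ₀ η₀) (ε / 2), by positivity,
      (min_le_left _ _).trans (min_le_left _ _), (min_le_left _ _).trans (min_le_right _ _),
      (min_le_right _ _).trans_lt (by linarith)⟩
  have hbox : ∀ v ∈ Set.Icc 0 r, ∀ x ∈ Set.Icc (x₀ - r) (x₀ + r),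
      3 / 2 * D 0 x₀ < D v x ∧ D v x < 1 / 2 * D 0 x₀ := by
    intro v hv x hx
    have := hball (x := (v, x)) (by
      rw [Prod.dist_eq, max_lt_iff, Real.dist_eq, Real.dist_eq]
      refine ⟨abs_lt.2 ⟨?_, ?_⟩, abs_lt.2 ⟨?_, ?_⟩⟩ <;>
        simp only <;> linarith [hv.1, hv.2, hx.1, hx.2])
    rw [Real.dist_eq, abs_lt] at this
    constructor <;> linarith [this.1, this.2]
  obtain ⟨n, hn⟩ := exists_nat_gt (-(3 / 2 * D 0 x₀))
  let cv : ℝ → ℝ := fun v => max 0 (min v r)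
  let cx : ℝ → ℝ := fun x => max (x₀ - r) (min x (x₀ + r))
  have hcv : ∀ v, cv v ∈ Set.Icc 0 r := fun v =>
    ⟨le_max_left _ _, max_le hr.le (min_le_right _ _)⟩
  have hcx : ∀ x, cx x ∈ Set.Icc (x₀ - r) (x₀ + r) := fun x =>
    ⟨le_max_left _ _, max_le (by linarith) (min_le_right _ _)⟩
  have hcv' : ∀ v ∈ Set.Icc 0 r, cv v = v := fun v hv => by
    simp only [cv]; rw [min_eq_left hv.2, max_eq_right hv.1]
  have hcx' : ∀ x ∈ Set.Icc (x₀ - r) (x₀ + r), cx x = x := fun x hx => by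
    simp only [cx]; rw [min_eq_left hx.2, max_eq_right hx.1]
  have hcvc : Continuous cv := by fun_prop
  have hcxc : Continuous cx := by fun_prop
  have hφr : ContinuousOn (fun p : ℝ × ℝ => φ p.1 p.2)
      (Set.Icc 0 r ×ˢ Set.Icc (x₀ - r) (x₀ + r)) :=
    hφ.mono (Set.prod_mono (Set.Icc_subset_Icc le_rfl hrδ)
      (Set.Icc_subset_Icc (by linarith) (by linarith)))
  -- clamping both variables to the box gives a globally defined right-hand side
  let R : ℝ → ℝ → ℝ := fun v x => (n + 1) * cx x + φ (cv v) (cx x)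
  have hRc : Continuous fun p : ℝ × ℝ => R p.1 p.2 := by
    have h1 : Continuous fun p : ℝ × ℝ => φ (cv p.1) (cx p.2) :=
      hφr.comp_continuous (f := fun p : ℝ × ℝ => (cv p.1, cx p.2)) (by fun_prop)
        (fun p => ⟨hcv _, hcx _⟩)
    exact (continuous_const.mul (hcxc.comp continuous_snd)).add h1
  obtain ⟨C, hC⟩ : ∃ C, ∀ v x, |R v x| ≤ C := by
    have hcpt : IsCompact (Set.Icc 0 r ×ˢ Set.Icc (x₀ - r) (x₀ + r)) :=
      isCompact_Icc.prod isCompact_Icc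
    obtain ⟨C, hC⟩ := hcpt.exists_bound_of_continuousOn
      (f := fun p : ℝ × ℝ => R p.1 p.2) hRc.continuousOn
    refine ⟨C, fun v x => ?_⟩
    have := hC (cv v, cx x) ⟨hcv _, hcx _⟩
    simpa only [R, hcv' _ (hcv v), hcx' _ (hcx x), Real.norm_eq_abs] using this
  have hcxl : ∀ x y, |cx x - cx y| ≤ |x - y| := fun x y => by
    calc |cx x - cx y| ≤ |min x (x₀ + r) - min y (x₀ + r)| := by
          simpa using abs_max_sub_max_le_max (x₀ - r) (min x (x₀ + r)) (x₀ - r) (min y (x₀ + r))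
      _ ≤ |x - y| := by
          simpa using abs_min_sub_min_le_max x (x₀ + r) y (x₀ + r)
  have hL : ∀ v x y, |R v x - R v y| ≤ (n + 1 + 1 / 2 * D 0 x₀) * |x - y| := by
    intro v x y
    have hlip := (convex_Icc (x₀ - r) (x₀ + r)).norm_image_sub_le_of_norm_hasDerivWithin_le
      (f := fun x => (n + 1) * x + φ (cv v) x) (f' := fun x => (n + 1) * 1 + D (cv v) x)
      (C := n + 1 + 1 / 2 * D 0 x₀) (x := cx y) (y := cx x)
      (fun z hz => ((((hasDerivAt_id z).const_mul ((n : ℝ) + 1))).add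
        (hD (cv v) ⟨(hcv v).1, (hcv v).2.trans hrδ⟩ z
          ⟨by linarith [hz.1], by linarith [hz.2]⟩)).hasDerivWithinAt)
      (fun z hz => by
        have := hbox _ (hcv v) z hz
        rw [Real.norm_eq_abs, abs_le]
        constructor <;> linarith [this.1, this.2]) (hcx y) (hcx x)
    refine hlip.trans (mul_le_mul_of_nonneg_left (hcxl x y) (by linarith))
  obtain ⟨u, huc, hu⟩ := exists_wavg_fixedPoint n R hRc C _ hC (by linarith) (by linarith) hL
  have hRu : Continuous fun t => R t (u t) := hRc.comp (continuous_id.prodMk huc)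
  have hx₀ : x₀ ∈ Set.Icc (x₀ - r) (x₀ + r) := ⟨by linarith, by linarith⟩
  have h0r : (0:ℝ) ∈ Set.Icc 0 r := ⟨le_rfl, hr.le⟩
  -- `u 0` and `x₀` are both fixed by the contraction `R 0 · / (n + 1)`
  have hu0 : u 0 = x₀ := by
    have h1 : ((n:ℝ) + 1) * u 0 = R 0 (u 0) := by
      conv_lhs => rw [hu 0, wavg_zero]
      field_simp
    have h2 : R 0 x₀ = (n + 1) * x₀ := by
      simp only [R, hcv' _ h0r, hcx' _ hx₀, hφ0, add_zero]
    have h3 := hL 0 (u 0) x₀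
    rw [← h1, h2, ← mul_sub, abs_mul, abs_of_pos (by positivity : (0:ℝ) < n + 1)] at h3
    have h4 : |u 0 - x₀| ≤ 0 := by nlinarith [abs_nonneg (u 0 - x₀)]
    exact sub_eq_zero.1 (abs_nonpos_iff.1 h4)
  refine ⟨u, huc, hu0, ?_⟩
  have hnear : ∀ᶠ v in nhds (0:ℝ), u v ∈ Set.Icc (x₀ - r) (x₀ + r) :=
    huc.continuousAt.eventually (by
      rw [hu0]; exact Icc_mem_nhds (by linarith) (by linarith))
  filter_upwards [nhdsWithin_le_nhds hnear, self_mem_nhdsWithin,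
    nhdsWithin_le_nhds (Iio_mem_nhds hr)] with v hv hv0 hvr
  have hd := wavg_hasDerivAt n hRu (ne_of_gt hv0)
  rw [← funext hu] at hd
  refine hd.congr_deriv ?_
  simp only [R, hcv' v ⟨le_of_lt hv0, le_of_lt hvr⟩, hcx' _ hv]
  ring

/-! ### The equation for `b / v` -/

/-- Also valid at `v = 0`, where both the function and its derivative reduce to constants. -/
lemma wavg_scale_hasDerivAt (n : ℕ) {g : ℝ → ℝ} (hg : Continuous g) (v : ℝ) {x : ℝ} (hx : x ≠ 0) :
    HasDerivAt (fun x => wavg n g (v * x)) ((g (v * x) - (n + 1) * wavg n g (v * x)) / x) x := by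
  rcases eq_or_ne v 0 with rfl | hv
  · have h0 : (g (0 * x) - (n + 1) * wavg n g (0 * x)) / x = 0 := by
      have : (n : ℝ) + 1 ≠ 0 := by positivity
      rw [zero_mul, wavg_zero, mul_div_cancel₀ _ this, sub_self, zero_div]
    rw [h0]
    simp only [zero_mul]
    exact hasDerivAt_const _ _
  · have h1 := wavg_hasDerivAt n hg (mul_ne_zero hv hx)
    have h2 : HasDerivAt (fun x => v * x) v x := by simpa using (hasDerivAt_id x).const_mul v
    refine (h1.comp x h2).congr_deriv ?_
    field_simp

/-- `surplus g v x = v⁻² ∫₀^{v x} (v - ξ) g ξ dξ`, written so that it makes sense at `v = 0`. In the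
unknown `x = b / v`, the numerator `G(b) (v - Φ(b))` of `H` is `v² * surplus g v x`. -/
noncomputable def surplus (g : ℝ → ℝ) (v x : ℝ) : ℝ :=
  x * wavg 0 g (v * x) - x ^ 2 * wavg 1 g (v * x)

lemma surplus_hasDerivAt {g : ℝ → ℝ} (hg : Continuous g) (v : ℝ) {x : ℝ} (hx : x ≠ 0) :
    HasDerivAt (surplus g v) (g (v * x) * (1 - x)) x := by
  have h := ((hasDerivAt_id x).mul (wavg_scale_hasDerivAt 0 hg v hx)).sub
    ((hasDerivAt_pow 2 x).mul (wavg_scale_hasDerivAt 1 hg v hx))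
  refine h.congr_deriv ?_
  simp
  field_simp
  ring

lemma surplus_continuous {g : ℝ → ℝ} (hg : Continuous g) :
    Continuous fun p : ℝ × ℝ => surplus g p.1 p.2 := by
  have h0 := wavg_continuous 0 hg
  have h1 := wavg_continuous 1 hg
  unfold surplus
  fun_prop

/-- The right-hand side of the equation `v x' = blowup … v x` for `x = b / v`. -/
noncomputable def blowup (c : ℝ) (f g : ℝ → ℝ) (v x : ℝ) : ℝ :=
  c * (f v / wavg 0 f v) * (surplus g v x / (g (v * x) * (x - 1))) - x

/-- The `x`-derivative of `blowup c f g v`, where `g'` is the derivative of `g`. -/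
noncomputable def blowupDeriv (c : ℝ) (f g g' : ℝ → ℝ) (v x : ℝ) : ℝ :=
  c * (f v / wavg 0 f v) *
    (-1 - surplus g v x * (v * g' (v * x) * (x - 1) + g (v * x)) / (g (v * x) * (x - 1)) ^ 2) - 1

lemma blowup_hasDerivAt (c : ℝ) {f g g' : ℝ → ℝ} (hg : Continuous g) (hgpos : ∀ x, 0 < g x)
    {v x : ℝ} (hx : 1 < x) (hg' : v = 0 ∨ HasDerivAt g (g' (v * x)) (v * x)) :
    HasDerivAt (blowup c f g v) (blowupDeriv c f g g' v x) x := by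
  have hx1 : x - 1 ≠ 0 := by linarith
  have hgx := (hgpos (v * x)).ne'
  have hgs : HasDerivAt (fun x => g (v * x)) (v * g' (v * x)) x := by
    rcases hg' with rfl | h
    · simp only [zero_mul]
      exact hasDerivAt_const _ _
    · have h2 : HasDerivAt (fun x => v * x) v x := by simpa using (hasDerivAt_id x).const_mul v
      exact (h.comp x h2).congr_deriv (mul_comm _ _)
  have h := (((surplus_hasDerivAt hg v (by linarith : x ≠ 0)).div
    (hgs.mul ((hasDerivAt_id x).sub_const 1)) (mul_ne_zero hgx hx1)).const_mul
      (c * (f v / wavg 0 f v))).sub (hasDerivAt_id x)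
  refine h.congr_deriv ?_
  simp only [blowupDeriv, id, Pi.mul_apply]
  congr 2
  field_simp
  ring

lemma blowup_continuousAt (c : ℝ) {f g : ℝ → ℝ} (hf : Continuous f) (hg : Continuous g)
    (hfpos : ∀ x, 0 < f x) (hgpos : ∀ x, 0 < g x) {p : ℝ × ℝ} (hp : 1 < p.2) :
    ContinuousAt (fun p : ℝ × ℝ => blowup c f g p.1 p.2) p := by
  have hw := wavg_continuous 0 hf
  have hs := surplus_continuous hg
  have h1 := (wavg_pos 0 hf hfpos p.1).ne'
  have h2 : g (p.1 * p.2) * (p.2 - 1) ≠ 0 := mul_ne_zero (hgpos _).ne' (by linarith)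
  unfold blowup
  exact (((continuousAt_const.mul ((by fun_prop : ContinuousAt (fun p : ℝ × ℝ => f p.1) p).div
    (by fun_prop) h1)).mul (hs.continuousAt.div (by fun_prop) h2)).sub (by fun_prop))

lemma blowupDeriv_continuousAt (c : ℝ) {f g g' : ℝ → ℝ} (hf : Continuous f) (hg : Continuous g)
    (hg' : Continuous g') (hfpos : ∀ x, 0 < f x) (hgpos : ∀ x, 0 < g x)
    {p : ℝ × ℝ} (hp : 1 < p.2) :
    ContinuousAt (fun p : ℝ × ℝ => blowupDeriv c f g g' p.1 p.2) p := by
  have hw := wavg_continuous 0 hf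
  have hs := surplus_continuous hg
  have h1 := (wavg_pos 0 hf hfpos p.1).ne'
  have h2 : (g (p.1 * p.2) * (p.2 - 1)) ^ 2 ≠ 0 :=
    pow_ne_zero 2 (mul_ne_zero (hgpos _).ne' (by linarith))
  unfold blowupDeriv
  exact (((continuousAt_const.mul ((by fun_prop : ContinuousAt (fun p : ℝ × ℝ => f p.1) p).div
    (by fun_prop) h1)).mul (continuousAt_const.sub
      ((by fun_prop : Continuous fun p : ℝ × ℝ => surplus g p.1 p.2 *
        (p.1 * g' (p.1 * p.2) * (p.2 - 1) + g (p.1 * p.2))).continuousAt.div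
          (by fun_prop) h2))).sub continuousAt_const)

lemma surplus_zero (g : ℝ → ℝ) (x : ℝ) : surplus g 0 x = g 0 * (x - x ^ 2 / 2) := by
  simp only [surplus, zero_mul, wavg_zero]
  push_cast
  ring

lemma blowup_zero {N : ℝ} (hN : 1 < N) {f g : ℝ → ℝ} (hf : 0 < f 0) (hg : 0 < g 0) :
    blowup (N - 1) f g 0 (2 * N / (N + 1)) = 0 := by
  have h1 : 2 * N / (N + 1) - 1 = (N - 1) / (N + 1) := by field_simp; ring
  have h2 : N - 1 ≠ 0 := by linarith
  have h3 : N + 1 ≠ 0 := by linarith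
  simp only [blowup, surplus_zero, zero_mul, wavg_zero, h1]
  push_cast
  field_simp
  ring

lemma blowupDeriv_zero_neg {c x : ℝ} (hc : 0 < c) (hx1 : 1 < x) (hx2 : x < 2) {f g : ℝ → ℝ}
    (g' : ℝ → ℝ) (hf : 0 < f 0) (hg : 0 < g 0) : blowupDeriv c f g g' 0 x < 0 := by
  have h1 : 0 < x - x ^ 2 / 2 := by nlinarith
  have h2 : 0 < x - 1 := by linarith
  simp only [blowupDeriv, surplus_zero, zero_mul, wavg_zero, zero_add]
  have h3 : 0 ≤ g 0 * (x - x ^ 2 / 2) * g 0 / (g 0 * (x - 1)) ^ 2 := by positivity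
  have h4 : 0 < c * (f 0 / (f 0 / (((0:ℕ):ℝ) + 1))) := by
    push_cast
    positivity
  nlinarith

/-! ### Comparison with the inverse of `Φ` -/

/-- The function `w ↦ ∫₀ʷ (v - ξ) g ξ dξ` is positive on `(0, v]` and decreasing beyond `v`, so a
zero `w > 0` of it lies beyond every `b` at which it is positive. -/
lemma lt_of_integral_pos {g : ℝ → ℝ} (hg : Continuous g) (hgpos : ∀ x, 0 < g x) {v b w : ℝ}
    (hw0 : 0 < w) (hb : 0 < ∫ ξ in (0:ℝ)..b, (v - ξ) * g ξ)
    (hw : ∫ ξ in (0:ℝ)..w, (v - ξ) * g ξ = 0) : b < w := by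
  have hint : ∀ p q : ℝ, IntervalIntegrable (fun ξ => (v - ξ) * g ξ) volume p q := fun p q =>
    Continuous.intervalIntegrable (by fun_prop) _ _
  have hvw : v ≤ w := by
    by_contra! h
    have : 0 < ∫ ξ in (0:ℝ)..w, (v - ξ) * g ξ :=
      intervalIntegral.intervalIntegral_pos_of_pos_on (hint _ _)
        (fun ξ hξ => mul_pos (by linarith [hξ.2]) (hgpos ξ)) hw0
    linarith
  by_contra! h
  have h1 := intervalIntegral.integral_add_adjacent_intervals (hint 0 w) (hint w b)
  have h2 : 0 ≤ ∫ ξ in w..b, -((v - ξ) * g ξ) :=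
    intervalIntegral.integral_nonneg h fun ξ hξ => by
      have := hgpos ξ
      nlinarith [hξ.1]
  rw [intervalIntegral.integral_neg] at h2
  linarith

lemma integral_surplus {g : ℝ → ℝ} (hg : Continuous g) (v b : ℝ) :
    ∫ ξ in (0:ℝ)..b, (v - ξ) * g ξ = v * (∫ ξ in (0:ℝ)..b, g ξ) - ∫ ξ in (0:ℝ)..b, ξ * g ξ := by
  rw [← intervalIntegral.integral_const_mul, ← intervalIntegral.integral_sub]
  · apply intervalIntegral.integral_congr
    intro ξ _
    simp only
    ring
  all_goals exact Continuous.intervalIntegrable (by fun_prop) _ _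

/-! ### Extension of the densities to the line -/

/-- A function on `[0, w]` extended to `ℝ` by its endpoint values. -/
noncomputable def clampExt (w : ℝ) (h : ℝ → ℝ) (x : ℝ) : ℝ := h (max 0 (min x w))

lemma clampExt_continuous {w : ℝ} (hw : 0 ≤ w) {h : ℝ → ℝ} (hh : ContinuousOn h (Set.Icc 0 w)) :
    Continuous (clampExt w h) :=
  hh.comp_continuous (by fun_prop) fun x => ⟨le_max_left _ _, max_le hw (min_le_right _ _)⟩

lemma clampExt_pos {w : ℝ} (hw : 0 ≤ w) {h : ℝ → ℝ} (hh : ∀ x ∈ Set.Icc 0 w, 0 < h x) (x : ℝ) :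
    0 < clampExt w h x :=
  hh _ ⟨le_max_left _ _, max_le hw (min_le_right _ _)⟩

lemma clampExt_eq {w x : ℝ} (h : ℝ → ℝ) (hx : x ∈ Set.Icc 0 w) : clampExt w h x = h x := by
  rw [clampExt, min_eq_left hx.2, max_eq_right hx.1]

lemma integral_clampExt {w b : ℝ} (h k : ℝ → ℝ) (hb : b ∈ Set.Icc 0 w) :
    ∫ ξ in (0:ℝ)..b, k ξ * clampExt w h ξ = ∫ ξ in (0:ℝ)..b, k ξ * h ξ := by
  apply intervalIntegral.integral_congr
  intro ξ hξ
  rw [Set.uIcc_of_le hb.1] at hξ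
  simp only
  rw [clampExt_eq h ⟨hξ.1, hξ.2.trans hb.2⟩]

/-! ### The solution near zero -/

/-- If in addition `g` is continuously differentiable on `[0, w̄]`, then
there exist `δ̂ ∈ (0, v̄]` and a continuous function `b : [0, δ̂] → ℝ` with `b 0 = 0` such
that `b` is differentiable on `(0, δ̂]` with `b'(v) = H (b v) v` there, satisfies
`v < b v < Φ⁻¹ v` for all `v ∈ (0, δ̂]`, and `b v / v → 2N/(N+1)` as `v ↓ 0`. -/
theorem stmt5
    (wbar vbar : ℝ) (hwbar : 0 < wbar) (hvbar : 0 < vbar)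
    (g : ℝ → ℝ)
    (hg_cont : ContinuousOn g (Set.Icc 0 wbar))
    (hg_pos : ∀ x ∈ Set.Icc 0 wbar, 0 < g x)
    (hg_int : (∫ ξ in (0:ℝ)..wbar, g ξ) = 1)
    (g' : ℝ → ℝ)
    (hg'_cont : ContinuousOn g' (Set.Icc 0 wbar))
    (hg' : ∀ x ∈ Set.Icc 0 wbar, HasDerivWithinAt g (g' x) (Set.Icc 0 wbar) x)
    (G : ℝ → ℝ) (hG : ∀ b, G b = ∫ ξ in (0:ℝ)..b, g ξ)
    (Φ : ℝ → ℝ) (hΦ0 : Φ 0 = 0)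
    (hΦ : ∀ b ∈ Set.Ioc 0 wbar, Φ b = (∫ ξ in (0:ℝ)..b, ξ * g ξ) / G b)
    (f : ℝ → ℝ)
    (hf_cont : ContinuousOn f (Set.Icc 0 vbar))
    (hf_pos : ∀ x ∈ Set.Icc 0 vbar, 0 < f x)
    (hf_int : (∫ ξ in (0:ℝ)..vbar, f ξ) = 1)
    (F : ℝ → ℝ) (hF : ∀ v, F v = ∫ ξ in (0:ℝ)..v, f ξ)
    (N : ℕ) (hN : 2 ≤ N)
    (μ : ℝ) (hμ : μ = ∫ ξ in (0:ℝ)..wbar, ξ * g ξ) (hμv : vbar ≤ μ)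
    (Ψ : ℝ → ℝ)
    (hΨl : ∀ b ∈ Set.Icc 0 wbar, Ψ (Φ b) = b)
    (hΨr : ∀ ξ ∈ Set.Icc 0 μ, Ψ ξ ∈ Set.Icc 0 wbar ∧ Φ (Ψ ξ) = ξ)
    (H : ℝ → ℝ → ℝ)
    (hH : ∀ v ∈ Set.Ioc 0 vbar, ∀ b ∈ Set.Ioo v (Ψ v),
      H b v = (N - 1 : ℝ) * (f v / F v) * (G b / g b) * ((v - Φ b) / (b - v))) :
    ∃ δ ∈ Set.Ioc 0 vbar, ∃ b : ℝ → ℝ,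
      ContinuousOn b (Set.Icc 0 δ) ∧ b 0 = 0 ∧
      (∀ v ∈ Set.Ioc 0 δ,
        HasDerivWithinAt b (H (b v) v) (Set.Icc 0 δ) v ∧ v < b v ∧ b v < Ψ v) ∧
      Filter.Tendsto (fun v => b v / v) (nhdsWithin 0 (Set.Ioi 0))
        (nhds (2 * N / (N + 1) : ℝ)) := by
  have hN' : (2:ℝ) ≤ N := by exact_mod_cast hN
  have hN1 : (0:ℝ) < (N:ℝ) + 1 := by linarith
  set x₀ : ℝ := 2 * N / (N + 1) with hx₀
  have hx1 : 1 < x₀ := by rw [hx₀, lt_div_iff₀ hN1]; linarith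
  have hx2 : x₀ < 2 := by rw [hx₀, div_lt_iff₀ hN1]; linarith
  have hgc := clampExt_continuous hwbar.le hg_cont
  have hg'c := clampExt_continuous hwbar.le hg'_cont
  have hfc := clampExt_continuous hvbar.le hf_cont
  have hgp := clampExt_pos hwbar.le hg_pos
  have hfp := clampExt_pos hvbar.le hf_pos
  set ge := clampExt wbar g with hge
  set ge' := clampExt wbar g' with hge'
  set fe := clampExt vbar f with hfe
  have hGe : ∀ b ∈ Set.Icc 0 wbar, G b = ∫ ξ in (0:ℝ)..b, ge ξ := fun b hb => by
    have := integral_clampExt g (fun _ => 1) hb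
    simp only [one_mul] at this
    rw [hG, this]
  have hFe : ∀ v ∈ Set.Icc 0 vbar, F v = v * wavg 0 fe v := fun v hv => by
    have h1 := integral_clampExt f (fun _ => 1) hv
    have h2 := pow_mul_wavg 0 fe v
    simp only [one_mul, pow_zero, zero_add, pow_one] at h1 h2
    rw [hF, h2, h1]
  have hMe : ∀ b ∈ Set.Icc 0 wbar, ∫ ξ in (0:ℝ)..b, ξ * ge ξ = ∫ ξ in (0:ℝ)..b, ξ * g ξ :=
    fun b hb => integral_clampExt g (fun ξ => ξ) hb
  have hGpos : ∀ b ∈ Set.Ioc 0 wbar, 0 < G b := fun b hb => by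
    rw [hGe b ⟨hb.1.le, hb.2⟩]
    exact intervalIntegral.intervalIntegral_pos_of_pos_on (hgc.intervalIntegrable _ _)
      (fun ξ _ => hgp ξ) hb.1
  have hΦe : ∀ b ∈ Set.Ioc 0 wbar, ∀ v,
      G b * (v - Φ b) = ∫ ξ in (0:ℝ)..b, (v - ξ) * ge ξ := fun b hb v => by
    have := (hGpos b hb).ne'
    rw [integral_surplus hgc, hMe b ⟨hb.1.le, hb.2⟩, ← hGe b ⟨hb.1.le, hb.2⟩, hΦ b hb]
    field_simp
  have hge_deriv : ∀ b ∈ Set.Ioo 0 wbar, HasDerivAt ge (ge' b) b := fun b hb => by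
    have hb' : b ∈ Set.Icc 0 wbar := ⟨hb.1.le, hb.2.le⟩
    have h1 := (hg' b hb').hasDerivAt (Icc_mem_nhds hb.1 hb.2)
    rw [hge', clampExt_eq g' hb']
    refine h1.congr_of_eventuallyEq ?_
    filter_upwards [Icc_mem_nhds hb.1 hb.2] with y hy using clampExt_eq g hy
  obtain ⟨δ₀, hδ₀, hδv, hδw⟩ : ∃ δ₀ > 0, δ₀ ≤ vbar ∧ δ₀ * 2 < wbar :=
    ⟨min vbar (wbar / 3), by positivity, min_le_left _ _, by
      linarith [min_le_right vbar (wbar / 3)]⟩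
  obtain ⟨η, hη, hη1, hη2⟩ : ∃ η > 0, 1 < x₀ - η ∧ x₀ + η < 2 :=
    ⟨min (x₀ - 1) (2 - x₀) / 2, half_pos (lt_min (by linarith) (by linarith)), by
      linarith [min_le_left (x₀ - 1) (2 - x₀)], by linarith [min_le_right (x₀ - 1) (2 - x₀)]⟩
  obtain ⟨u, huc, hu0, hu⟩ := exists_singular_solution (blowup (N - 1) fe ge)
    (blowupDeriv (N - 1) fe ge ge') x₀ δ₀ η hδ₀ hη
    (fun p hp => (blowup_continuousAt _ hfc hgc hfp hgp
      (by linarith [hp.2.1])).continuousWithinAt)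
    (fun v hv x hx => blowup_hasDerivAt _ hgc hgp (by linarith [hx.1]) (by
      rcases eq_or_lt_of_le hv.1 with h | h
      · exact Or.inl h.symm
      · exact Or.inr (hge_deriv _ ⟨mul_pos h (by linarith [hx.1]), by nlinarith [hx.1, hx.2, hv.2]⟩)))
    (blowupDeriv_continuousAt _ hfc hgc hg'c hfp hgp hx1)
    (blowupDeriv_zero_neg (by linarith) hx1 hx2 ge' (hfp 0) (hgp 0))
    (blowup_zero (by linarith) (hfp 0) (hgp 0))
  -- near `0`, `u` stays in `(1, 2)` and the surplus stays positive
  have hu_near : ∀ᶠ v in nhdsWithin (0:ℝ) (Set.Ioi 0), 1 < u v ∧ u v < 2 ∧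
      0 < surplus ge v (u v) := by
    refine nhdsWithin_le_nhds ?_
    have hs : Continuous fun v => surplus ge v (u v) :=
      (surplus_continuous hgc).comp (continuous_id.prodMk huc)
    have hs0 : 0 < surplus ge 0 (u 0) := by
      rw [surplus_zero, hu0]
      exact mul_pos (hgp 0) (by nlinarith)
    filter_upwards [huc.continuousAt.eventually (lt_mem_nhds (hu0.symm ▸ hx1)),
      huc.continuousAt.eventually (gt_mem_nhds (hu0.symm ▸ hx2)),
      hs.continuousAt.eventually (lt_mem_nhds hs0)] with v h1 h2 h3 using ⟨h1, h2, h3⟩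
  obtain ⟨δ₁, hδ₁, hall⟩ := mem_nhdsGT_iff_exists_Ioc_subset.1 (hu.and hu_near)
  have hδ₁ : 0 < δ₁ := hδ₁
  refine ⟨min δ₀ δ₁, ⟨lt_min hδ₀ hδ₁, (min_le_left _ _).trans hδv⟩, fun v => v * u v,
    (continuous_id.mul huc).continuousOn, zero_mul _, ?_, ?_⟩
  · intro v hv
    have hv0 : 0 < v := hv.1
    have hvδ : v ≤ δ₀ := hv.2.trans (min_le_left _ _)
    obtain ⟨hd, hu1, hu2, hs⟩ := hall ⟨hv0, hv.2.trans (min_le_right _ _)⟩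
    have hb : v * u v ∈ Set.Ioc 0 wbar := ⟨by positivity, by nlinarith⟩
    have hvb : v < v * u v := by nlinarith
    have hsur : G (v * u v) * (v - Φ (v * u v)) = v ^ 2 * surplus ge v (u v) := by
      have h0 := pow_mul_wavg 0 ge (v * u v)
      have h1 := pow_mul_wavg 1 ge (v * u v)
      simp only [pow_zero, one_mul, zero_add, pow_one] at h0 h1
      rw [hΦe _ hb, integral_surplus hgc, ← h0, ← h1, surplus]
      ring
    obtain ⟨hΨm, hΨv⟩ := hΨr v ⟨hv0.le, by linarith⟩
    have hΨpos : 0 < Ψ v := by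
      refine lt_of_le_of_ne hΨm.1 fun h => ?_
      rw [← h, hΦ0] at hΨv
      linarith
    have hbΨ : v * u v < Ψ v := by
      refine lt_of_integral_pos hgc hgp hΨpos ?_ (?_ : ∫ ξ in (0:ℝ)..(Ψ v), (v - ξ) * ge ξ = 0)
      · rw [← hΦe _ hb, hsur]
        positivity
      · rw [← hΦe _ ⟨hΨpos, hΨm.2⟩, hΨv, sub_self, mul_zero]
    refine ⟨?_, hvb, hbΨ⟩
    have hvm : v ∈ Set.Icc 0 vbar := ⟨hv0.le, hvδ.trans hδv⟩
    have hwpos := wavg_pos 0 hfc hfp v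
    have hgpos := hgp (v * u v)
    have hu1' : u v - 1 ≠ 0 := by linarith
    have hval : H (v * u v) v = 1 * u v + v * (blowup (N - 1) fe ge v (u v) / v) := by
      rw [hH v ⟨hv0, hvm.2⟩ _ ⟨hvb, hbΨ⟩, hFe v hvm, ← clampExt_eq f hvm,
        ← clampExt_eq g ⟨hb.1.le, hb.2⟩, ← hfe, ← hge]
      have h1 : G (v * u v) / ge (v * u v) * ((v - Φ (v * u v)) / (v * u v - v)) =
          v * (surplus ge v (u v) / (ge (v * u v) * (u v - 1))) := by
        rw [div_mul_div_comm, hsur, show v * u v - v = v * (u v - 1) by ring]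
        field_simp
      rw [mul_assoc, h1, blowup]
      field_simp
      ring
    rw [hval]
    exact ((hasDerivAt_id v).mul hd).hasDerivWithinAt
  · have h1 : Tendsto u (nhdsWithin 0 (Set.Ioi 0)) (nhds x₀) := by
      rw [← hu0]
      exact huc.continuousAt.tendsto.mono_left nhdsWithin_le_nhds
    refine h1.congr' ?_
    filter_upwards [self_mem_nhdsWithin] with v hv
    rw [mul_div_cancel_left₀ _ (ne_of_gt hv)]
end

section
/- If in addition g is continuously differentiable on [0,w̄], then there exists a strictly increasing continuous function b : [0,v̄] → ℝ with b(0) = 0 such that b is differentiable on (0,v̄] with b'(v) = H(b(v), v) for all v ∈ (0,v̄], and v < b(v) < Φ⁻¹(v) for all v ∈ (0,v̄]. -/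
/-!
The solution is a limit of solutions started at positive times on the graph of `Φ⁻¹`.

With `S b = ∫₀ᵇ ξ g ξ dξ` one has `G b * (v - Φ b) = v * G b - S b`, so the equation reads
`b' = r v * (v * G b - S b) / (g b * (b - v))` with `r = (N - 1) * f / F`. It is singular at
`v = 0` and on the diagonal `b = v`.

The bounds on `f` and `g` provide `δ > 0` such that the field exceeds `1 + δ` on the whole line
`b = (1 + δ) v`. Replacing `b - v` by `max (b - v) (δ v)` and projecting `b` to `[0, wbar]`
changes nothing between that line and `b = wbar`, and makes the field bounded and globally
Lipschitz on each `[ε, vbar]`, `ε > 0`; the Picard–Lindelöf theorem gives the solution `b_ε` on `[ε, vbar]` with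
`b_ε ε = Φ⁻¹ ε` (`exists_solution`). The region `(1 + δ) v ≤ b ≤ Φ⁻¹ v` is forward invariant
(`Setup.invariant`): its lower edge by the choice of `δ`, its upper edge, which is the zero set of
`v * G b - S b`, because there `b' = 0` and the derivative of `v * G b - S b` along the solution is
`G b > 0`.

By uniqueness and invariance `b_ε` decreases with `ε`. Its limit as `ε → 0` solves the equation on
`(0, vbar]` by dominated convergence in the integral equation (`solution_limit`,
`exists_solution_singular`) and stays in the closed region. It never touches the upper edge at a
time `v`, as it would have to lie above that edge just before `v`. Finally
`S b ≤ v * G b` bounds `b v` by a multiple of `v`, which gives continuity at `0`, and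
`b' > 0` gives strict monotonicity (`Setup.exists_bid`).
-/

open MeasureTheory intervalIntegral Set Filter

/-! ### Scalar equations with a bounded, globally Lipschitz field -/

/-- `UBL I u`: the family of functions `u t`, `t ∈ I`, is bounded and Lipschitz on the whole line,
with a constant (serving both bounds) that does not depend on `t`. -/
def UBL (I : Set ℝ) (u : ℝ → ℝ → ℝ) : Prop :=
  ∃ C, 0 ≤ C ∧ ∀ t ∈ I, ∀ x y, |u t x| ≤ C ∧ |u t x - u t y| ≤ C * |x - y|

lemma UBL.mul {I : Set ℝ} {u v : ℝ → ℝ → ℝ} (hu : UBL I u) (hv : UBL I v) :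
    UBL I (fun t x => u t x * v t x) := by
  obtain ⟨C, hC, hu⟩ := hu
  obtain ⟨D, hD, hv⟩ := hv
  refine ⟨C * D + C * D, by positivity, fun t ht x y => ⟨?_, ?_⟩⟩
  · rw [abs_mul]
    nlinarith [mul_le_mul (hu t ht x x).1 (hv t ht x x).1 (abs_nonneg _) hC, mul_nonneg hC hD]
  · have e : u t x * v t x - u t y * v t y =
        u t x * (v t x - v t y) + (u t x - u t y) * v t y := by ring
    rw [e]
    refine (abs_add_le _ _).trans ?_
    rw [abs_mul, abs_mul]
    have h1 := mul_le_mul (hu t ht x x).1 (hv t ht x y).2 (abs_nonneg _) hC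
    have h2 := mul_le_mul (hu t ht x y).2 (hv t ht y y).1 (abs_nonneg _) (by positivity)
    nlinarith

lemma UBL.sub {I : Set ℝ} {u v : ℝ → ℝ → ℝ} (hu : UBL I u) (hv : UBL I v) :
    UBL I (fun t x => u t x - v t x) := by
  obtain ⟨C, hC, hu⟩ := hu
  obtain ⟨D, hD, hv⟩ := hv
  refine ⟨C + D, by positivity, fun t ht x y => ⟨?_, ?_⟩⟩
  · exact (abs_sub _ _).trans (add_le_add (hu t ht x x).1 (hv t ht x x).1)
  · have e : u t x - v t x - (u t y - v t y) = (u t x - u t y) - (v t x - v t y) := by ring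
    rw [e]
    refine (abs_sub _ _).trans ?_
    have h1 := (hu t ht x y).2
    have h2 := (hv t ht x y).2
    nlinarith

lemma UBL.inv {I : Set ℝ} {u : ℝ → ℝ → ℝ} {c K : ℝ} (hc : 0 < c) (hK : 0 ≤ K)
    (hu : ∀ t ∈ I, ∀ x, c ≤ u t x) (hl : ∀ t ∈ I, ∀ x y, |u t x - u t y| ≤ K * |x - y|) :
    UBL I (fun t x => (u t x)⁻¹) := by
  refine ⟨max c⁻¹ (K / c ^ 2), by positivity, fun t ht x y => ⟨?_, ?_⟩⟩
  · have hx := hu t ht x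
    rw [abs_of_pos (inv_pos.2 (hc.trans_le hx))]
    exact (inv_anti₀ hc hx).trans (le_max_left _ _)
  · have hx := hu t ht x
    have hy := hu t ht y
    have hx0 := hc.trans_le hx
    have hy0 := hc.trans_le hy
    have e : (u t x)⁻¹ - (u t y)⁻¹ = (u t y - u t x) / (u t x * u t y) := by
      field_simp
    rw [e, abs_div, abs_of_pos (mul_pos hx0 hy0), abs_sub_comm]
    calc |u t x - u t y| / (u t x * u t y) ≤ (K * |x - y|) / c ^ 2 := by
          refine div_le_div₀ (by positivity) (hl t ht x y) (by positivity) ?_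
          nlinarith
      _ = K / c ^ 2 * |x - y| := by ring
      _ ≤ _ := by gcongr; exact le_max_right _ _

lemma UBL.of_time {I : Set ℝ} {r : ℝ → ℝ} {C : ℝ} (h : ∀ t ∈ I, |r t| ≤ C) :
    UBL I (fun t _ => r t) := by
  refine ⟨max C 0, le_max_right _ _, fun t ht x y => ⟨(h t ht).trans (le_max_left _ _), ?_⟩⟩
  simp only [sub_self, abs_zero]
  positivity

lemma UBL.of_space {I : Set ℝ} {a : ℝ → ℝ} {C K : ℝ} (h : ∀ x, |a x| ≤ C)
    (hl : ∀ x y, |a x - a y| ≤ K * |x - y|) : UBL I (fun _ x => a x) := by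
  have hC : 0 ≤ C := (abs_nonneg _).trans (h 0)
  refine ⟨max C K, hC.trans (le_max_left _ _), fun t _ x y => ⟨(h x).trans (le_max_left _ _), ?_⟩⟩
  exact (hl x y).trans (by gcongr; exact le_max_right _ _)

lemma UBL.lipschitz {I : Set ℝ} {R : ℝ → ℝ → ℝ} (hR : UBL I R) :
    ∃ K : NNReal, ∀ t ∈ I, LipschitzWith K (R t) := by
  obtain ⟨C, hC, h⟩ := hR
  refine ⟨⟨C, hC⟩, fun t ht => LipschitzWith.of_dist_le_mul fun x y => ?_⟩
  rw [Real.dist_eq, Real.dist_eq]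
  exact (h t ht x y).2

/-- Picard–Lindelöf on a whole compact interval, for a bounded and globally Lipschitz field. -/
lemma exists_solution {R : ℝ → ℝ → ℝ} {a T : ℝ} (haT : a ≤ T) (hR : UBL (Icc a T) R)
    (hc : ∀ x, ContinuousOn (fun t => R t x) (Icc a T)) (x₀ : ℝ) :
    ∃ x : ℝ → ℝ, x a = x₀ ∧ ∀ t ∈ Icc a T, HasDerivWithinAt x (R t (x t)) (Icc a T) t := by
  obtain ⟨K, hK⟩ := hR.lipschitz
  obtain ⟨C, hC, h⟩ := hR
  -- boundedness of the field lets the ball be so large that a solution cannot leave it before `T`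
  have hPL : IsPicardLindelof R (⟨a, left_mem_Icc.2 haT⟩ : Icc a T) x₀
      (⟨C * (T - a), mul_nonneg hC (sub_nonneg.2 haT)⟩) 0 ⟨C, hC⟩ K :=
    { lipschitzOnWith := fun t ht => (hK t ht).lipschitzOnWith
      continuousOn := fun x _ => hc x
      norm_le := fun t ht x _ => (h t ht x x).1
      mul_max_le := by
        simp only [sub_self, NNReal.coe_zero, sub_zero, max_eq_left (sub_nonneg.2 haT)]
        exact le_rfl }
  obtain ⟨x, hx, hx'⟩ := hPL.exists_eq_forall_mem_Icc_hasDerivWithinAt₀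
  exact ⟨x, hx, hx'⟩

/-- A solution on `[a, T]` that starts below another one stays below it. -/
lemma solution_comparison {R : ℝ → ℝ → ℝ} {a T : ℝ} (hR : UBL (Icc a T) R) {x y : ℝ → ℝ}
    (hx : ∀ t ∈ Icc a T, HasDerivWithinAt x (R t (x t)) (Icc a T) t)
    (hy : ∀ t ∈ Icc a T, HasDerivWithinAt y (R t (y t)) (Icc a T) t)
    (h0 : x a ≤ y a) : ∀ t ∈ Icc a T, x t ≤ y t := by
  intro t ht
  by_contra! hlt
  have hxc : ContinuousOn x (Icc a T) := fun s hs => (hx s hs).continuousWithinAt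
  have hyc : ContinuousOn y (Icc a T) := fun s hs => (hy s hs).continuousWithinAt
  have hsub : Icc a t ⊆ Icc a T := Icc_subset_Icc_right ht.2
  -- otherwise the two graphs meet at some `s`, and coincide from there on by uniqueness
  obtain ⟨s, hs, hs0⟩ := intermediate_value_Icc ht.1 ((hxc.sub hyc).mono hsub)
    (show (0:ℝ) ∈ _ from ⟨by simpa using h0, by simpa using hlt.le⟩)
  obtain ⟨K, hK⟩ := hR.lipschitz
  have hsub' : Icc s t ⊆ Icc a T := Icc_subset_Icc hs.1 ht.2
  have key : EqOn x y (Icc s t) := by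
    refine ODE_solution_unique_of_mem_Icc_right (v := R) (s := fun _ => univ) (K := K)
      (fun u hu => (hK u (hsub' ⟨hu.1, hu.2.le⟩)).lipschitzOnWith) (hxc.mono hsub') ?_
      (fun _ _ => mem_univ _) (hyc.mono hsub') ?_ (fun _ _ => mem_univ _) ?_
    · intro u hu
      refine (hx u (hsub' ⟨hu.1, hu.2.le⟩)).mono_of_mem_nhdsWithin ?_
      exact mem_of_superset (Icc_mem_nhdsGE hu.2)
        (Icc_subset_Icc (hs.1.trans hu.1) ht.2)
    · intro u hu
      refine (hy u (hsub' ⟨hu.1, hu.2.le⟩)).mono_of_mem_nhdsWithin ?_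
      exact mem_of_superset (Icc_mem_nhdsGE hu.2)
        (Icc_subset_Icc (hs.1.trans hu.1) ht.2)
    · simpa [sub_eq_zero] using hs0
  exact absurd (key ⟨hs.2, le_rfl⟩) hlt.ne'

/-- A pointwise limit of solutions of a bounded Lipschitz equation is a solution: the integral
equation passes to the limit by dominated convergence. -/
lemma solution_limit {R : ℝ → ℝ → ℝ} {s T : ℝ} (hsT : s ≤ T) (hR : UBL (Icc s T) R)
    (hc : ContinuousOn (Function.uncurry R) (Icc s T ×ˢ univ)) {x : ℕ → ℝ → ℝ} {b : ℝ → ℝ}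
    (hx : ∀ᶠ n in atTop, ∀ t ∈ Icc s T, HasDerivWithinAt (x n) (R t (x n t)) (Icc s T) t)
    (hb : ∀ t ∈ Icc s T, Tendsto (fun n => x n t) atTop (nhds (b t))) :
    ∀ t ∈ Icc s T, HasDerivWithinAt b (R t (b t)) (Icc s T) t := by
  obtain ⟨C, hC, h⟩ := id hR
  have hcomp : ∀ z : ℝ → ℝ, ContinuousOn z (Icc s T) →
      ContinuousOn (fun t => R t (z t)) (Icc s T) := fun z hz =>
    hc.comp (continuousOn_id.prodMk hz) (fun t ht => ⟨ht, mem_univ _⟩)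
  have hint : ∀ᶠ n in atTop, ∀ t ∈ Icc s T, x n t = x n s + ∫ u in s..t, R u (x n u) := by
    filter_upwards [hx] with n hn t ht
    have hxc : ContinuousOn (x n) (Icc s T) := fun u hu => (hn u hu).continuousWithinAt
    have hsub : Icc s t ⊆ Icc s T := Icc_subset_Icc_right ht.2
    rw [integral_eq_sub_of_hasDerivAt_of_le ht.1 (hxc.mono hsub)]
    · ring
    · intro u hu
      exact (hn u (hsub ⟨hu.1.le, hu.2.le⟩)).hasDerivAt
        (Icc_mem_nhds hu.1 (hu.2.trans_le ht.2))
    · exact ((hcomp _ hxc).mono hsub).intervalIntegrable_of_Icc ht.1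
  have hbint : ∀ t ∈ Icc s T, b t = b s + ∫ u in s..t, R u (b u) := by
    intro t ht
    have hsub : Icc s t ⊆ Icc s T := Icc_subset_Icc_right ht.2
    have hI : Tendsto (fun n => ∫ u in s..t, R u (x n u)) atTop
        (nhds (∫ u in s..t, R u (b u))) := by
      refine intervalIntegral.tendsto_integral_filter_of_dominated_convergence (fun _ => C) ?_ ?_
        intervalIntegrable_const ?_
      · filter_upwards [hx] with n hn
        have hxc : ContinuousOn (x n) (Icc s T) := fun u hu => (hn u hu).continuousWithinAt
        rw [uIoc_of_le ht.1]
        exact (((hcomp _ hxc).mono hsub).mono Ioc_subset_Icc_self).aestronglyMeasurable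
          measurableSet_Ioc
      · refine Eventually.of_forall fun n => Eventually.of_forall fun u hu => ?_
        rw [uIoc_of_le ht.1] at hu
        exact (h u (hsub (Ioc_subset_Icc_self hu)) _ 0).1
      · refine Eventually.of_forall fun u hu => ?_
        rw [uIoc_of_le ht.1] at hu
        have hu' := hsub (Ioc_subset_Icc_self hu)
        obtain ⟨K, hK⟩ := hR.lipschitz
        exact ((hK u hu').continuous.tendsto _).comp (hb u hu')
    refine tendsto_nhds_unique (hb t ht) ?_
    refine ((hb s ⟨le_rfl, hsT⟩).add hI).congr' ?_
    filter_upwards [hint] with n hn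
    exact (hn t ht).symm
  have hbc : ContinuousOn b (Icc s T) := by
    have hL : LipschitzOnWith ⟨C, hC⟩ b (Icc s T) := by
      refine LipschitzOnWith.of_dist_le_mul fun t ht u hu => ?_
      refine le_of_tendsto ((hb t ht).dist (hb u hu)) ?_
      filter_upwards [hx] with n hn
      have := Convex.norm_image_sub_le_of_norm_hasDerivWithin_le (C := C) hn
        (fun v hv => (h v hv _ 0).1) (convex_Icc s T) hu ht
      rw [dist_eq_norm, dist_eq_norm]
      exact this
    exact hL.continuousOn
  intro t ht
  have hd := ODE.hasDerivWithinAt_picard_Icc (t₀ := s) ⟨le_rfl, hsT⟩ hc hbc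
    (fun _ _ => mem_univ _) (b s) ht
  refine hd.congr (fun u hu => ?_) ?_
  · rw [hbint u hu]; rfl
  · rw [hbint t ht]; rfl

/-! ### Solutions starting from a singular time -/

/-- An equation that is regular on `(0, T]` and possibly singular at `0` has a solution on
`(0, T]` inside the tube `Z`, provided the solutions started at time `ε` on the upper edge `c ε`
remain in the tube. As `ε` decreases these solutions decrease, and the solution is their limit. -/
lemma exists_solution_singular {R : ℝ → ℝ → ℝ} {T W : ℝ} (hT : 0 < T)
    (hR : ∀ s, 0 < s → UBL (Icc s T) R)
    (hc : ContinuousOn (Function.uncurry R) (Ioc 0 T ×ˢ univ))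
    (c : ℝ → ℝ) (Z : ℝ → Set ℝ) (hZc : ∀ t, IsClosed (Z t))
    (hZW : ∀ t ∈ Ioc 0 T, Z t ⊆ Icc 0 W) (hZt : ∀ t ∈ Ioc 0 T, ∀ x ∈ Z t, x ≤ c t)
    (hinv : ∀ ε ∈ Ioo 0 T, ∀ x : ℝ → ℝ, x ε = c ε →
      (∀ t ∈ Icc ε T, HasDerivWithinAt x (R t (x t)) (Icc ε T) t) → ∀ t ∈ Icc ε T, x t ∈ Z t) :
    ∃ b : ℝ → ℝ, b 0 = 0 ∧
      ∀ t ∈ Ioc 0 T, HasDerivWithinAt b (R t (b t)) (Icc 0 T) t ∧ b t ∈ Z t := by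
  set e : ℕ → ℝ := fun n => T / (n + 2) with he
  have he0 : ∀ n, 0 < e n := fun n => by simp only [he]; positivity
  have heT : ∀ n, e n < T := fun n => by
    simp only [he]
    rw [div_lt_iff₀ (by positivity)]
    nlinarith [(Nat.cast_nonneg n : (0:ℝ) ≤ n)]
  have heanti : ∀ n, e (n + 1) ≤ e n := fun n => by
    simp only [he]
    push_cast
    gcongr
    linarith
  have hlim : Tendsto e atTop (nhds 0) := by
    refine Tendsto.div_atTop tendsto_const_nhds ?_
    exact tendsto_atTop_add_const_right _ _ tendsto_natCast_atTop_atTop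
  have hsol : ∀ n, ∃ x : ℝ → ℝ, x (e n) = c (e n) ∧
      ∀ t ∈ Icc (e n) T, HasDerivWithinAt x (R t (x t)) (Icc (e n) T) t := fun n =>
    exists_solution (heT n).le (hR _ (he0 n))
      (fun x => hc.comp (continuousOn_id.prodMk continuousOn_const)
        (fun t ht => ⟨⟨(he0 n).trans_le ht.1, ht.2⟩, mem_univ _⟩)) _
  choose x hx0 hx using hsol
  have hxZ : ∀ n, ∀ t ∈ Icc (e n) T, x n t ∈ Z t := fun n =>
    hinv (e n) ⟨he0 n, heT n⟩ (x n) (hx0 n) (hx n)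
  -- before its starting time a solution is replaced by the upper bound `W`, so that the
  -- sequence is decreasing on the whole of `(0, T]`
  set y : ℕ → ℝ → ℝ := fun n t => if e n ≤ t then x n t else W with hy
  have hanti : ∀ t ∈ Ioc 0 T, Antitone fun n => y n t := by
    intro t ht
    refine antitone_nat_of_succ_le fun n => ?_
    simp only [hy]
    by_cases h : e n ≤ t
    · rw [if_pos h, if_pos ((heanti n).trans h)]
      refine solution_comparison (hR _ (he0 n)) (fun s hs => ?_) (hx n) ?_ t ⟨h, ht.2⟩
      · exact (hx (n + 1) s ⟨(heanti n).trans hs.1, hs.2⟩).mono (Icc_subset_Icc_left (heanti n))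
      · rw [hx0 n]
        exact hZt _ ⟨he0 n, (heT n).le⟩ _ (hxZ (n + 1) _ ⟨heanti n, (heT n).le⟩)
    · rw [if_neg h]
      split_ifs with h'
      · exact (hZW t ht (hxZ _ t ⟨h', ht.2⟩)).2
      · exact le_rfl
  have hWnn : 0 ≤ W := by
    have h := hZW T ⟨hT, le_rfl⟩ (hxZ 0 T ⟨(heT 0).le, le_rfl⟩)
    exact h.1.trans h.2
  have hbdd : ∀ t ∈ Ioc 0 T, BddBelow (range fun n => y n t) := by
    intro t ht
    refine ⟨0, ?_⟩
    rintro _ ⟨n, rfl⟩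
    simp only [hy]
    split_ifs with h'
    · exact (hZW t ht (hxZ _ t ⟨h', ht.2⟩)).1
    · exact hWnn
  set b : ℝ → ℝ := fun t => if 0 < t then ⨅ n, y n t else 0 with hb
  have hev : ∀ s, 0 < s → ∀ᶠ n in atTop, e n ≤ s := fun s hs =>
    hlim.eventually (Iic_mem_nhds hs)
  have hbt : ∀ t ∈ Ioc 0 T, Tendsto (fun n => x n t) atTop (nhds (b t)) := by
    intro t ht
    simp only [hb, if_pos ht.1]
    refine (tendsto_atTop_ciInf (hanti t ht) (hbdd t ht)).congr' ?_
    filter_upwards [hev t ht.1] with n hn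
    simp only [hy, if_pos hn]
  refine ⟨b, by simp [hb], fun t ht => ⟨?_, ?_⟩⟩
  · have hs : 0 < t / 2 := half_pos ht.1
    have hst : t / 2 < t := half_lt_self ht.1
    have hsub : Icc (t / 2) T ⊆ Ioc 0 T := fun u hu => ⟨hs.trans_le hu.1, hu.2⟩
    have h := solution_limit (x := x) (b := b) (hst.le.trans ht.2) (hR _ hs)
      (hc.mono (prod_mono hsub le_rfl)) (by
        filter_upwards [hev _ hs] with n hn u hu
        exact (hx n u ⟨hn.trans hu.1, hu.2⟩).mono (Icc_subset_Icc_left hn))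
      (fun u hu => hbt u (hsub hu)) t ⟨hst.le, ht.2⟩
    refine h.mono_of_mem_nhdsWithin ?_
    filter_upwards [self_mem_nhdsWithin, mem_nhdsWithin_of_mem_nhds (Ioi_mem_nhds hst)] with u h1 h2
    exact ⟨le_of_lt h2, h1.2⟩
  · refine (hZc t).mem_of_tendsto (hbt t ht) ?_
    filter_upwards [hev t ht.1] with n hn
    exact hxZ n t ⟨hn, ht.2⟩

/-! ### The normalised equation -/

/-- Projection of `x` to `[0, W]`. -/
def clamp (W x : ℝ) : ℝ := max 0 (min x W)

lemma clamp_mem {W : ℝ} (hW : 0 < W) (x : ℝ) : clamp W x ∈ Icc 0 W :=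
  ⟨le_max_left _ _, max_le hW.le (min_le_right _ _)⟩

lemma clamp_of_mem {W x : ℝ} (hx : x ∈ Icc 0 W) : clamp W x = x := by
  rw [clamp, min_eq_left hx.2, max_eq_right hx.1]

lemma continuous_clamp (W : ℝ) : Continuous (clamp W) := by
  unfold clamp; fun_prop

lemma abs_clamp_sub_le (W x y : ℝ) : |clamp W x - clamp W y| ≤ |x - y| := by
  have h1 : |clamp W x - clamp W y| ≤ |min x W - min y W| := by
    unfold clamp
    rw [max_comm 0, max_comm 0]
    exact abs_max_sub_max_le_abs _ _ _
  exact h1.trans (abs_min_sub_min_le_max x W y W |>.trans (by simp))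

lemma le_of_hasDerivAt_nonneg {u u' : ℝ → ℝ} {a b : ℝ} (hu : ∀ x, HasDerivAt u (u' x) x)
    (h : ∀ x, a < x → 0 ≤ u' x) (hab : a ≤ b) : u a ≤ u b := by
  refine monotoneOn_of_hasDerivWithinAt_nonneg (convex_Ici a)
    (fun x _ => (hu x).continuousAt.continuousWithinAt)
    (fun x _ => (hu x).hasDerivWithinAt) (fun x hx => ?_) self_mem_Ici (mem_Ici.2 hab) hab
  rw [interior_Ici] at hx
  exact h x hx

/-- The data of the equation after normalisation: the density `g` is extended to a positive
Lipschitz function on the line, `G` and `S` are the primitives of `g x` and `x * g x`, `r` stands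
for `(N - 1) * f / F`, and `c` for the inverse of `Φ = S / G`. -/
structure Setup (W T m M K ρ : ℝ) (g G S r c : ℝ → ℝ) : Prop where
  W_pos : 0 < W
  T_pos : 0 < T
  m_pos : 0 < m
  m_le : ∀ x, m ≤ g x
  le_M : ∀ x, g x ≤ M
  lip : ∀ x y, |g x - g y| ≤ K * |x - y|
  derivG : ∀ x, HasDerivAt G (g x) x
  derivS : ∀ x, HasDerivAt S (x * g x) x
  G_zero : G 0 = 0
  S_zero : S 0 = 0
  T_le : T * G W ≤ S W
  r_cont : ContinuousOn r (Ioc 0 T)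
  ρ_pos : 0 < ρ
  r_ge : ∀ v ∈ Ioc 0 T, ρ / v ≤ r v
  c_mem : ∀ v ∈ Ioc 0 T, c v ∈ Ioc 0 W
  c_eq : ∀ v ∈ Ioc 0 T, v * G (c v) - S (c v) = 0

/-- The right-hand side of the equation, with `x` projected to `[0, W]` and with the denominator
`x - t` bounded below by `δ * t`. -/
noncomputable def field (W δ : ℝ) (g G S r : ℝ → ℝ) (t x : ℝ) : ℝ :=
  r t * (t * G (clamp W x) - S (clamp W x)) * (g (clamp W x))⁻¹ *
    (max (clamp W x - t) (δ * t))⁻¹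

namespace Setup
variable {W T m M K ρ : ℝ} {g G S r c : ℝ → ℝ}

lemma g_pos (h : Setup W T m M K ρ g G S r c) (x : ℝ) : 0 < g x := h.m_pos.trans_le (h.m_le x)

lemma M_pos (h : Setup W T m M K ρ g G S r c) : 0 < M := (h.g_pos 0).trans_le (h.le_M 0)

lemma r_pos (h : Setup W T m M K ρ g G S r c) {v : ℝ} (hv : v ∈ Ioc 0 T) : 0 < r v :=
  (div_pos h.ρ_pos hv.1).trans_le (h.r_ge v hv)

lemma le_G (h : Setup W T m M K ρ g G S r c) {b : ℝ} (hb : 0 ≤ b) : m * b ≤ G b := by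
  have := le_of_hasDerivAt_nonneg (u := fun x => G x - m * x) (u' := fun x => g x - m * 1)
    (fun x => (h.derivG x).sub ((hasDerivAt_id x).const_mul m))
    (fun x _ => by have := h.m_le x; linarith) hb
  simp only [h.G_zero] at this
  linarith

lemma G_le (h : Setup W T m M K ρ g G S r c) {b : ℝ} (hb : 0 ≤ b) : G b ≤ M * b := by
  have := le_of_hasDerivAt_nonneg (u := fun x => M * x - G x) (u' := fun x => M * 1 - g x)
    (fun x => ((hasDerivAt_id x).const_mul M).sub (h.derivG x))
    (fun x _ => by have := h.le_M x; linarith) hb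
  simp only [h.G_zero] at this
  linarith

lemma G_pos (h : Setup W T m M K ρ g G S r c) {b : ℝ} (hb : 0 < b) : 0 < G b :=
  (mul_pos h.m_pos hb).trans_le (h.le_G hb.le)

lemma le_S (h : Setup W T m M K ρ g G S r c) {b : ℝ} (hb : 0 ≤ b) : m / 2 * b ^ 2 ≤ S b := by
  have := le_of_hasDerivAt_nonneg (u := fun x => S x - m / 2 * x ^ 2)
    (u' := fun x => x * g x - m / 2 * (↑2 * x ^ (2 - 1)))
    (fun x => (h.derivS x).sub ((hasDerivAt_pow 2 x).const_mul (m / 2)))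
    (fun x hx => by have := h.m_le x; norm_num; nlinarith) hb
  simp only [h.S_zero] at this
  norm_num at this
  linarith

/-- The truncated mean `S b / G b` is at most `(1 - m / (2 * M)) * b`. -/
lemma mean_gap (h : Setup W T m M K ρ g G S r c) {b : ℝ} (hb : 0 ≤ b) (v : ℝ) :
    (v - (1 - m / (2 * M)) * b) * G b ≤ v * G b - S b := by
  have := le_of_hasDerivAt_nonneg (u := fun x => x * G x - S x - m / 2 * x ^ 2)
    (u' := fun x => (1 * G x + x * g x) - x * g x - m / 2 * (↑2 * x ^ (2 - 1)))
    (fun x => (((hasDerivAt_id x).mul (h.derivG x)).sub (h.derivS x)).sub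
      ((hasDerivAt_pow 2 x).const_mul (m / 2)))
    (fun x hx => by have := h.le_G hx.le; norm_num; linarith) hb
  simp only [h.S_zero] at this
  norm_num at this
  have hG := mul_le_mul_of_nonneg_left (h.G_le hb)
    (show 0 ≤ m / (2 * M) * b from
      mul_nonneg (div_nonneg h.m_pos.le (by linarith [h.M_pos])) hb)
  have e : m / (2 * M) * b * (M * b) = m / 2 * b ^ 2 := by
    have := h.M_pos.ne'
    field_simp
  rw [e] at hG
  nlinarith

lemma c_ge (h : Setup W T m M K ρ g G S r c) {v : ℝ} (hv : v ∈ Ioc 0 T) :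
    v ≤ (1 - m / (2 * M)) * c v := by
  have h1 := h.mean_gap (h.c_mem v hv).1.le v
  rw [h.c_eq v hv] at h1
  have hG := h.G_pos (h.c_mem v hv).1
  by_contra! hlt
  nlinarith [mul_pos (sub_pos.2 hlt) hG]

lemma T_le_W (h : Setup W T m M K ρ g G S r c) : T ≤ (1 - m / (2 * M)) * W := by
  have h1 := h.mean_gap h.W_pos.le T
  have hG := h.G_pos h.W_pos
  by_contra! hlt
  nlinarith [mul_pos (sub_pos.2 hlt) hG, h.T_le]

lemma kappa_pos (h : Setup W T m M K ρ g G S r c) : 0 < m / (2 * M) :=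
  div_pos h.m_pos (by linarith [h.M_pos])

lemma kappa_le (h : Setup W T m M K ρ g G S r c) : m / (2 * M) ≤ 1 / 2 := by
  have := h.M_pos
  rw [div_le_iff₀ (by linarith)]
  linarith [(h.m_le 0).trans (h.le_M 0)]

/-- Above the diagonal, `v * G x - S x` is strictly decreasing in `x`; a point where it is
nonnegative therefore lies below its zero `c v`. -/
lemma le_c (h : Setup W T m M K ρ g G S r c) {v x : ℝ} (hv : v ∈ Ioc 0 T)
    (hx : 0 ≤ v * G x - S x) : x ≤ c v := by
  by_contra! hlt
  have hvc : v ≤ c v := by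
    have := h.c_ge hv
    nlinarith [mul_pos h.kappa_pos (h.c_mem v hv).1]
  have hd : ∀ y, HasDerivAt (fun y => S y - v * G y) (y * g y - v * g y) y := fun y =>
    (h.derivS y).sub ((h.derivG y).const_mul v)
  have := strictMonoOn_of_hasDerivWithinAt_pos (convex_Ici v)
    (f := fun y => S y - v * G y) (f' := fun y => y * g y - v * g y)
    (fun y _ => (hd y).continuousAt.continuousWithinAt) (fun y _ => (hd y).hasDerivWithinAt)
    (fun y hy => by
      rw [interior_Ici] at hy
      nlinarith [mul_pos (sub_pos.2 hy) (h.g_pos y)])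
    (mem_Ici.2 hvc) (mem_Ici.2 (hvc.trans hlt.le)) hlt
  have hc := h.c_eq v hv
  simp only at this
  linarith

/-- The fraction of `t` by which solutions stay above the diagonal. -/
noncomputable def delta (m M ρ : ℝ) : ℝ := min (m / (2 * M) / 2) (ρ * (m / (2 * M)) * m / (8 * M))

lemma delta_pos (h : Setup W T m M K ρ g G S r c) : 0 < delta m M ρ := by
  have := h.kappa_pos
  have := h.m_pos
  have := h.M_pos
  have := h.ρ_pos
  unfold delta
  positivity

lemma delta_le (_h : Setup W T m M K ρ g G S r c) : delta m M ρ ≤ m / (2 * M) / 2 := min_le_left _ _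

lemma delta_le' (h : Setup W T m M K ρ g G S r c) :
    4 * (M * delta m M ρ) ≤ ρ * (m / (2 * M) / 2) * m := by
  have h1 : delta m M ρ ≤ ρ * (m / (2 * M)) * m / (8 * M) := min_le_right _ _
  rw [le_div_iff₀ (by linarith [h.M_pos])] at h1
  linarith

lemma field_eq (_h : Setup W T m M K ρ g G S r c) {δ t x : ℝ} (hδ : 0 ≤ δ) (ht : 0 ≤ t)
    (hx : (1 + δ) * t ≤ x) (hxW : x ≤ W) :
    field W δ g G S r t x = r t * (t * G x - S x) / (g x * (x - t)) := by
  have hx0 : 0 ≤ x := le_trans (by positivity) hx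
  rw [field, clamp_of_mem ⟨hx0, hxW⟩, max_eq_left (by linarith), div_eq_mul_inv, mul_inv]
  ring

lemma field_continuousOn (h : Setup W T m M K ρ g G S r c) {δ : ℝ} (hδ : 0 < δ) :
    ContinuousOn (Function.uncurry (field W δ g G S r)) (Ioc 0 T ×ˢ univ) := by
  have hG : Continuous G := continuous_iff_continuousAt.2 fun x => (h.derivG x).continuousAt
  have hS : Continuous S := continuous_iff_continuousAt.2 fun x => (h.derivS x).continuousAt
  have hg : Continuous g := by
    have hK : 0 ≤ K := by
      have := (abs_nonneg _).trans (h.lip 1 0)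
      simpa using this
    refine (LipschitzWith.of_dist_le_mul (K := ⟨K, hK⟩) fun x y => ?_).continuous
    rw [Real.dist_eq, Real.dist_eq]
    exact h.lip x y
  have hcl : Continuous fun p : ℝ × ℝ => clamp W p.2 := (continuous_clamp W).comp continuous_snd
  have hr : ContinuousOn (fun p : ℝ × ℝ => r p.1) (Ioc 0 T ×ˢ univ) :=
    h.r_cont.comp continuousOn_fst fun p hp => hp.1
  refine ((hr.mul ?_).mul ?_).mul ?_
  · exact ((continuous_fst.mul (hG.comp hcl)).sub (hS.comp hcl)).continuousOn
  · exact ((hg.comp hcl).continuousOn).inv₀ fun p _ => (h.g_pos _).ne'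
  · refine (((hcl.sub continuous_fst).max (continuous_fst.const_mul δ)).continuousOn).inv₀ ?_
    intro p hp
    exact ((mul_pos hδ hp.1.1).trans_le (le_max_right _ _)).ne'

lemma field_UBL (h : Setup W T m M K ρ g G S r c) {δ s : ℝ} (hδ : 0 < δ) (hs : 0 < s) :
    UBL (Icc s T) (field W δ g G S r) := by
  have hprim : ∀ (u u' : ℝ → ℝ) (C : ℝ), (∀ x, HasDerivAt u (u' x) x) →
      (∀ x ∈ Icc 0 W, |u' x| ≤ C) → UBL (Icc s T) (fun _ x => u (clamp W x)) := by
    intro u u' C hu hC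
    have hCnn : 0 ≤ C := (abs_nonneg _).trans (hC 0 ⟨le_rfl, h.W_pos.le⟩)
    obtain ⟨D, hD⟩ := isCompact_Icc.exists_bound_of_continuousOn (s := Icc 0 W) (f := u)
      (fun x _ => (hu x).continuousAt.continuousWithinAt)
    refine UBL.of_space (C := D) (K := C) (fun x => hD _ (clamp_mem h.W_pos x)) fun x y => ?_
    have := Convex.norm_image_sub_le_of_norm_hasDerivWithin_le
      (fun z _ => (hu z).hasDerivWithinAt) hC (convex_Icc 0 W) (clamp_mem h.W_pos y)
      (clamp_mem h.W_pos x)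
    exact this.trans (mul_le_mul_of_nonneg_left (abs_clamp_sub_le W x y) hCnn)
  have hK : 0 ≤ K := by
    have := (abs_nonneg _).trans (h.lip 1 0)
    simpa using this
  have hsub : Icc s T ⊆ Ioc 0 T := fun t ht => ⟨hs.trans_le ht.1, ht.2⟩
  obtain ⟨Cr, hCr⟩ := isCompact_Icc.exists_bound_of_continuousOn (h.r_cont.mono hsub)
  have hr : UBL (Icc s T) (fun t _ => r t) := UBL.of_time hCr
  have ht : UBL (Icc s T) (fun t _ => t) := UBL.of_time (C := T) fun t ht => by
    rw [abs_of_pos (hsub ht).1]; exact ht.2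
  have hG := hprim G g M h.derivG fun x _ => by
    rw [abs_of_pos (h.g_pos x)]; exact h.le_M x
  have hS := hprim S (fun x => x * g x) (W * M) h.derivS fun x hx => by
    rw [abs_of_nonneg (mul_nonneg hx.1 (h.g_pos x).le)]
    exact mul_le_mul hx.2 (h.le_M x) (h.g_pos x).le h.W_pos.le
  have hg : UBL (Icc s T) (fun _ x => (g (clamp W x))⁻¹) :=
    UBL.inv h.m_pos hK (fun _ _ x => h.m_le _) fun _ _ x y =>
      (h.lip _ _).trans (mul_le_mul_of_nonneg_left (abs_clamp_sub_le W x y) hK)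
  have hd : UBL (Icc s T) (fun t x => (max (clamp W x - t) (δ * t))⁻¹) := by
    refine UBL.inv (c := δ * s) (K := 1) (by positivity) zero_le_one (fun t ht x => ?_)
      fun t _ x y => ?_
    · exact le_trans (mul_le_mul_of_nonneg_left ht.1 hδ.le) (le_max_right _ _)
    · refine (abs_max_sub_max_le_abs _ _ _).trans ?_
      rw [sub_sub_sub_cancel_right, one_mul]
      exact abs_clamp_sub_le W x y
  exact ((hr.mul ((ht.mul hG).sub hS)).mul hg).mul hd

/-- The tube confining the solutions at time `t`: the lower edge is `(1 + δ) t`, and the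
condition `0 ≤ t * G x - S x` means `x ≤ c t`. -/
def tube (W δ : ℝ) (G S : ℝ → ℝ) (t : ℝ) : Set ℝ :=
  {x | (1 + δ) * t ≤ x ∧ x ≤ W ∧ 0 ≤ t * G x - S x}

/-- The tube is forward invariant: the lower edge has slope `1 + δ`, smaller than that of the
field; at `W` the field is negative; and at zeros of `t * G x - S x` the field vanishes, so that
the derivative of this quantity along a solution is `G x > 0`. -/
lemma invariant (h : Setup W T m M K ρ g G S r c) {ε : ℝ} (hε : ε ∈ Ioo 0 T) {x : ℝ → ℝ}
    (hx0 : x ε = c ε)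
    (hx : ∀ t ∈ Icc ε T,
      HasDerivWithinAt x (field W (delta m M ρ) g G S r t (x t)) (Icc ε T) t) :
    ∀ t ∈ Icc ε T, x t ∈ tube W (delta m M ρ) G S t := by
  have hδ := h.delta_pos
  have hδ1 := h.delta_le
  have hδ2 := h.delta_le'
  have hκ := h.kappa_pos
  have hκ1 := h.kappa_le
  have hεI : ε ∈ Ioc 0 T := ⟨hε.1, hε.2.le⟩
  set δ := delta m M ρ with hδdef
  set κ := m / (2 * M) with hκdef
  have hxc : ContinuousOn x (Icc ε T) := fun t ht => (hx t ht).continuousWithinAt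
  have hx' : ∀ t ∈ Ico ε T, HasDerivWithinAt x (field W δ g G S r t (x t)) (Ici t) t := by
    intro t ht
    refine (hx t ⟨ht.1, ht.2.le⟩).mono_of_mem_nhdsWithin ?_
    exact mem_of_superset (Icc_mem_nhdsGE ht.2) (Icc_subset_Icc_left ht.1)
  have hTW : (1 + δ) * T ≤ W := by
    have := h.T_le_W
    nlinarith [mul_le_mul_of_nonneg_left this (show 0 ≤ 1 + δ by linarith), h.W_pos, h.T_pos,
      mul_pos hκ h.W_pos, mul_pos (mul_pos hκ h.W_pos) hδ]
  have hlow : ∀ t ∈ Icc ε T, (1 + δ) * t ≤ x t := by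
    refine image_le_of_deriv_right_lt_deriv_boundary' (f := fun t => (1 + δ) * t)
      (f' := fun _ => (1 + δ) * 1) (by fun_prop)
      (fun t _ => ((hasDerivAt_id t).const_mul _).hasDerivWithinAt) ?_ hxc hx' ?_
    · rw [hx0]
      have h1 := h.c_ge hεI
      have h2 := (h.c_mem ε hεI).1
      nlinarith [mul_le_mul_of_nonneg_left h1 (show 0 ≤ 1 + δ by linarith),
        mul_pos hκ h2, mul_pos (mul_pos hκ h2) hδ]
    · intro t ht heq
      have ht0 : 0 < t := hε.1.trans_le ht.1
      have htI : t ∈ Ioc 0 T := ⟨ht0, ht.2.le⟩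
      have hxW : x t ≤ W := by
        rw [← heq]
        exact le_trans (mul_le_mul_of_nonneg_left ht.2.le (by linarith)) hTW
      rw [h.field_eq hδ.le ht0.le heq.le hxW]
      have hxt : x t - t = δ * t := by rw [← heq]; ring
      have hxge : t ≤ x t := by nlinarith
      have hG : m * t ≤ G (x t) :=
        le_trans (mul_le_mul_of_nonneg_left hxge h.m_pos.le) (h.le_G (ht0.le.trans hxge))
      have hP : κ / 2 * t * (m * t) ≤ t * G (x t) - S (x t) := by
        refine le_trans ?_ (h.mean_gap (ht0.le.trans hxge) t)
        refine mul_le_mul ?_ hG (mul_pos h.m_pos ht0).le ?_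
        · rw [← hκdef, ← heq]
          nlinarith [mul_pos hκ ht0, mul_pos (mul_pos hκ ht0) hδ]
        · rw [← hκdef, ← heq]
          nlinarith [mul_pos hκ ht0, mul_pos (mul_pos hκ ht0) hδ]
      have hr := h.r_ge t htI
      have hnum : ρ * (κ / 2) * m * t ≤ r t * (t * G (x t) - S (x t)) := by
        calc ρ * (κ / 2) * m * t = ρ / t * (κ / 2 * t * (m * t)) := by field_simp
          _ ≤ _ := mul_le_mul hr hP (by have := h.m_pos; positivity) (h.r_pos htI).le
      have hgx := h.g_pos (x t)
      rw [hxt, lt_div_iff₀ (by positivity)]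
      have h4 : g (x t) * (δ * t) ≤ M * (δ * t) :=
        mul_le_mul_of_nonneg_right (h.le_M _) (by positivity)
      have h5 : 0 < M * (δ * t) := by have := h.M_pos; positivity
      have h6 : 4 * (M * (δ * t)) ≤ ρ * (κ / 2) * m * t := by
        have := mul_le_mul_of_nonneg_right hδ2 ht0.le
        linarith
      nlinarith
  have hup : ∀ t ∈ Icc ε T, x t ≤ W := by
    refine image_le_of_deriv_right_lt_deriv_boundary' hxc hx' (B := fun _ => W)
      (B' := fun _ => 0) ?_ continuousOn_const (fun t _ => hasDerivWithinAt_const _ _ _) ?_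
    · rw [hx0]; exact (h.c_mem ε hεI).2
    · intro t ht heq
      have ht0 : 0 < t := hε.1.trans_le ht.1
      have htI : t ∈ Ioc 0 T := ⟨ht0, ht.2.le⟩
      rw [h.field_eq hδ.le ht0.le (hlow t ⟨ht.1, ht.2.le⟩) heq.le, heq]
      have htW : 0 < W - t := by nlinarith [ht.2, h.T_pos]
      refine div_neg_of_neg_of_pos (mul_neg_of_pos_of_neg (h.r_pos htI) ?_)
        (mul_pos (h.g_pos _) htW)
      have := mul_lt_mul_of_pos_right ht.2 (h.G_pos h.W_pos)
      linarith [h.T_le]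
  intro t ht
  refine ⟨hlow t ht, hup t ht, ?_⟩
  have hGc : Continuous G := continuous_iff_continuousAt.2 fun x => (h.derivG x).continuousAt
  have hSc : Continuous S := continuous_iff_continuousAt.2 fun x => (h.derivS x).continuousAt
  have hcomp := image_le_of_deriv_right_lt_deriv_boundary' (f := fun _ : ℝ => (0:ℝ))
    (f' := fun _ => 0) (a := ε) (b := T) continuousOn_const
    (fun t _ => hasDerivWithinAt_const _ _ _)
    (B := fun t => t * G (x t) - S (x t))
    (B' := fun t => (1 * G (x t) + t * (g (x t) * field W δ g G S r t (x t))) -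
      x t * g (x t) * field W δ g G S r t (x t)) ?_ ?_ ?_ ?_
  · exact hcomp ht
  · rw [hx0, h.c_eq ε hεI]
  · exact (continuousOn_id.mul (hGc.comp_continuousOn hxc)).sub (hSc.comp_continuousOn hxc)
  · intro t ht
    exact ((hasDerivWithinAt_id t _).mul ((h.derivG _).comp_hasDerivWithinAt t (hx' t ht))).sub
      ((h.derivS _).comp_hasDerivWithinAt t (hx' t ht))
  · intro t ht heq
    have ht0 : 0 < t := hε.1.trans_le ht.1
    have hI : t ∈ Icc ε T := ⟨ht.1, ht.2.le⟩
    have h0 : field W δ g G S r t (x t) = 0 := by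
      rw [h.field_eq hδ.le ht0.le (hlow t hI) (hup t hI), ← heq]
      simp
    rw [h0]
    have : 0 < x t := lt_of_lt_of_le (by positivity) (hlow t hI)
    have := h.G_pos this
    linarith

/-- A solution of the normalised equation. -/
lemma exists_bid (h : Setup W T m M K ρ g G S r c) :
    ∃ b : ℝ → ℝ, StrictMonoOn b (Icc 0 T) ∧ ContinuousOn b (Icc 0 T) ∧ b 0 = 0 ∧
      ∀ v ∈ Ioc 0 T,
        HasDerivWithinAt b (r v * (v * G (b v) - S (b v)) / (g (b v) * (b v - v))) (Icc 0 T) v ∧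
        v < b v ∧ b v ≤ W ∧ b v < c v := by
  have hδ := h.delta_pos
  have hGc : Continuous G := continuous_iff_continuousAt.2 fun x => (h.derivG x).continuousAt
  have hSc : Continuous S := continuous_iff_continuousAt.2 fun x => (h.derivS x).continuousAt
  obtain ⟨b, hb0, hb⟩ := exists_solution_singular (R := field W (delta m M ρ) g G S r) (W := W)
    h.T_pos (fun s hs => h.field_UBL hδ hs) (h.field_continuousOn hδ) c
    (tube W (delta m M ρ) G S)
    (fun t => (isClosed_Ici (a := (1 + delta m M ρ) * t)).inter
      ((isClosed_Iic (a := W)).inter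
        (isClosed_le continuous_const ((hGc.const_mul t).sub hSc))))
    (fun t ht x hx => ⟨le_trans (by have := ht.1; positivity) hx.1, hx.2.1⟩)
    (fun t ht x hx => h.le_c ht hx.2.2)
    (fun ε hε x hx0 hx => h.invariant hε hx0 hx)
  set δ := delta m M ρ with hδdef
  have hvb : ∀ v ∈ Ioc 0 T, v < b v := fun v hv => by
    have := (hb v hv).2.1
    nlinarith [mul_pos hδ hv.1]
  have hderiv : ∀ v ∈ Ioc 0 T, HasDerivWithinAt b
      (r v * (v * G (b v) - S (b v)) / (g (b v) * (b v - v))) (Icc 0 T) v := fun v hv => by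
    have h1 := (hb v hv).1
    rwa [h.field_eq hδ.le hv.1.le (hb v hv).2.1 (hb v hv).2.2.1] at h1
  -- If `Q = v * G b - S b ≥ 0` vanished at `v`, then `b' = 0` and `Q' = G b > 0` there, and `Q`
  -- would be negative just before `v`.
  have hQ : ∀ v ∈ Ioc 0 T, 0 < v * G (b v) - S (b v) := by
    intro v hv
    refine lt_of_le_of_ne (hb v hv).2.2.2 fun heq => ?_
    have h1 : HasDerivWithinAt b 0 (Ioo 0 v) v := by
      have := hderiv v hv
      rw [← heq, mul_zero, zero_div] at this
      exact this.mono fun u hu => ⟨hu.1.le, hu.2.le.trans hv.2⟩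
    have h2 : HasDerivWithinAt (fun u => u * G (b u) - S (b u))
        ((1 * G (b v) + v * (g (b v) * 0)) - b v * g (b v) * 0) (Ioo 0 v) v :=
      ((hasDerivWithinAt_id v _).mul ((h.derivG _).comp_hasDerivWithinAt v h1)).sub
        ((h.derivS _).comp_hasDerivWithinAt v h1)
    rw [hasDerivWithinAt_iff_tendsto_slope' (by simp)] at h2
    have hG := h.G_pos (hv.1.trans (hvb v hv))
    have : (nhdsWithin v (Ioo 0 v)).NeBot := by
      rw [nhdsWithin_Ioo_eq_nhdsLT hv.1]
      infer_instance
    obtain ⟨u, hu1, hu2⟩ := ((h2.eventually (lt_mem_nhds (by linarith : (0:ℝ) < _))).and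
      self_mem_nhdsWithin).exists
    rw [slope_def_field, ← heq, sub_zero] at hu1
    have hu3 := (hb u ⟨hu2.1, hu2.2.le.trans hv.2⟩).2.2.2
    exact absurd hu1 (not_lt.2 (div_nonpos_of_nonneg_of_nonpos hu3 (sub_nonpos.2 hu2.2.le)))
  have hcont : ContinuousOn b (Icc 0 T) := by
    intro v hv
    rcases hv.1.eq_or_lt with rfl | hv0
    · -- `S b ≤ v G b` together with `S b ≥ m b² / 2` and `G b ≤ M b` bounds `b` linearly
      have hle : ∀ u ∈ Icc 0 T, 0 ≤ b u ∧ b u ≤ 2 * M / m * u := by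
        intro u hu
        rcases hu.1.eq_or_lt with rfl | hu0
        · simp [hb0]
        · have huI : u ∈ Ioc 0 T := ⟨hu0, hu.2⟩
          have hbu : 0 < b u := hu0.trans (hvb u huI)
          refine ⟨hbu.le, ?_⟩
          have h1 := h.le_S hbu.le
          have h2 := mul_le_mul_of_nonneg_left (h.G_le hbu.le) hu0.le
          have h3 := hQ u huI
          have h4 : m / 2 * b u ≤ u * M := by
            by_contra! hlt
            nlinarith [mul_lt_mul_of_pos_right hlt hbu]
          rw [div_mul_eq_mul_div, le_div_iff₀ h.m_pos]
          linarith
      have hz : Tendsto (fun u => 2 * M / m * u) (nhdsWithin 0 (Icc 0 T)) (nhds 0) := by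
        have : Continuous fun u : ℝ => 2 * M / m * u := by fun_prop
        simpa using (this.tendsto 0).mono_left nhdsWithin_le_nhds
      rw [ContinuousWithinAt, hb0]
      refine tendsto_of_tendsto_of_tendsto_of_le_of_le' tendsto_const_nhds hz ?_ ?_
      · filter_upwards [self_mem_nhdsWithin] with u hu using (hle u hu).1
      · filter_upwards [self_mem_nhdsWithin] with u hu using (hle u hu).2
    · exact (hderiv v ⟨hv0, hv.2⟩).continuousWithinAt
  refine ⟨b, ?_, hcont, hb0, fun v hv => ⟨hderiv v hv, hvb v hv, (hb v hv).2.2.1, ?_⟩⟩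
  · refine strictMonoOn_of_hasDerivWithinAt_pos (convex_Icc 0 T) hcont (fun v hv => ?_)
      (f' := fun v => r v * (v * G (b v) - S (b v)) / (g (b v) * (b v - v))) fun v hv => ?_
    · rw [interior_Icc] at hv ⊢
      exact (hderiv v ⟨hv.1, hv.2.le⟩).mono Ioo_subset_Icc_self
    · rw [interior_Icc] at hv
      have hvI : v ∈ Ioc 0 T := ⟨hv.1, hv.2.le⟩
      exact div_pos (mul_pos (h.r_pos hvI) (hQ v hvI))
        (mul_pos (h.g_pos _) (sub_pos.2 (hvb v hvI)))
  · refine lt_of_le_of_ne (h.le_c hv (hQ v hv).le) fun heq => ?_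
    have h1 := hQ v hv
    rw [heq, h.c_eq v hv] at h1
    exact lt_irrefl _ h1

end Setup

/-! ### The equation for `H` -/

/-- If in addition `g` is continuously differentiable on `[0, w̄]`, then
there exists a strictly increasing continuous function `b : [0, v̄] → ℝ` with `b 0 = 0`
such that `b` is differentiable on `(0, v̄]` with `b'(v) = H (b v) v` for all
`v ∈ (0, v̄]`, and `v < b v < Φ⁻¹ v` for all `v ∈ (0, v̄]`. -/
theorem stmt6
    (wbar vbar : ℝ) (hwbar : 0 < wbar) (hvbar : 0 < vbar)
    (g : ℝ → ℝ)
    (hg_cont : ContinuousOn g (Set.Icc 0 wbar))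
    (hg_pos : ∀ x ∈ Set.Icc 0 wbar, 0 < g x)
    (hg_int : (∫ ξ in (0:ℝ)..wbar, g ξ) = 1)
    (g' : ℝ → ℝ)
    (hg'_cont : ContinuousOn g' (Set.Icc 0 wbar))
    (hg' : ∀ x ∈ Set.Icc 0 wbar, HasDerivWithinAt g (g' x) (Set.Icc 0 wbar) x)
    (G : ℝ → ℝ) (hG : ∀ b, G b = ∫ ξ in (0:ℝ)..b, g ξ)
    (Φ : ℝ → ℝ) (hΦ0 : Φ 0 = 0)
    (hΦ : ∀ b ∈ Set.Ioc 0 wbar, Φ b = (∫ ξ in (0:ℝ)..b, ξ * g ξ) / G b)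
    (f : ℝ → ℝ)
    (hf_cont : ContinuousOn f (Set.Icc 0 vbar))
    (hf_pos : ∀ x ∈ Set.Icc 0 vbar, 0 < f x)
    (hf_int : (∫ ξ in (0:ℝ)..vbar, f ξ) = 1)
    (F : ℝ → ℝ) (hF : ∀ v, F v = ∫ ξ in (0:ℝ)..v, f ξ)
    (N : ℕ) (hN : 2 ≤ N)
    (μ : ℝ) (hμ : μ = ∫ ξ in (0:ℝ)..wbar, ξ * g ξ) (hμv : vbar ≤ μ)
    (Ψ : ℝ → ℝ)
    (hΨl : ∀ b ∈ Set.Icc 0 wbar, Ψ (Φ b) = b)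
    (hΨr : ∀ ξ ∈ Set.Icc 0 μ, Ψ ξ ∈ Set.Icc 0 wbar ∧ Φ (Ψ ξ) = ξ)
    (H : ℝ → ℝ → ℝ)
    (hH : ∀ v ∈ Set.Ioc 0 vbar, ∀ b ∈ Set.Ioo v (Ψ v),
      H b v = (N - 1 : ℝ) * (f v / F v) * (G b / g b) * ((v - Φ b) / (b - v))) :
    ∃ b : ℝ → ℝ,
      StrictMonoOn b (Set.Icc 0 vbar) ∧
      ContinuousOn b (Set.Icc 0 vbar) ∧ b 0 = 0 ∧
      ∀ v ∈ Set.Ioc 0 vbar,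
        HasDerivWithinAt b (H (b v) v) (Set.Icc 0 vbar) v ∧ v < b v ∧ b v < Ψ v := by
  -- `g` is extended constantly outside `[0, wbar]`, which keeps it positive and Lipschitz
  set gt : ℝ → ℝ := fun x => g (clamp wbar x) with hgt
  have hgtc : Continuous gt := by
    have : Continuous fun x => (⟨clamp wbar x, clamp_mem hwbar x⟩ : Icc 0 wbar) :=
      (continuous_clamp wbar).subtype_mk _
    exact hg_cont.domRestrict.comp this
  have hgt_eq : ∀ x ∈ Icc 0 wbar, gt x = g x := fun x hx => by
    simp only [hgt, clamp_of_mem hx]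
  have hgt_pos : ∀ x, 0 < gt x := fun x => hg_pos _ (clamp_mem hwbar x)
  set S : ℝ → ℝ := fun b => ∫ ξ in (0:ℝ)..b, ξ * gt ξ with hS
  set Gt : ℝ → ℝ := fun b => ∫ ξ in (0:ℝ)..b, gt ξ with hGt
  have hsub : ∀ b ∈ Icc 0 wbar, ∀ ξ ∈ uIcc 0 b, ξ ∈ Icc 0 wbar := fun b hb ξ hξ => by
    rw [uIcc_of_le hb.1] at hξ
    exact ⟨hξ.1, hξ.2.trans hb.2⟩
  have hGt_eq : ∀ b ∈ Icc 0 wbar, Gt b = G b := fun b hb => by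
    rw [hG]
    exact intervalIntegral.integral_congr fun ξ hξ => hgt_eq ξ (hsub b hb ξ hξ)
  have hS_eq : ∀ b ∈ Icc 0 wbar, S b = ∫ ξ in (0:ℝ)..b, ξ * g ξ := fun b hb =>
    intervalIntegral.integral_congr fun ξ hξ => by
      simp only [hgt_eq ξ (hsub b hb ξ hξ)]
  have hGt_pos : ∀ b, 0 < b → 0 < Gt b := fun b hb =>
    intervalIntegral.intervalIntegral_pos_of_pos_on (hgtc.intervalIntegrable _ _)
      (fun x _ => hgt_pos x) hb
  have hΦ_eq : ∀ b ∈ Icc 0 wbar, Φ b * Gt b = S b := by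
    intro b hb
    rcases hb.1.eq_or_lt with rfl | hb0
    · simp [hΦ0, hS]
    · rw [hΦ b ⟨hb0, hb.2⟩, hS_eq b hb, ← hGt_eq b hb, div_mul_cancel₀ _ (hGt_pos b hb0).ne']
  have hne : (Icc 0 wbar).Nonempty := nonempty_Icc.2 hwbar.le
  obtain ⟨x₁, hx₁, hmin⟩ := isCompact_Icc.exists_isMinOn hne hg_cont
  obtain ⟨x₂, hx₂, hmax⟩ := isCompact_Icc.exists_isMaxOn hne hg_cont
  obtain ⟨K, hK⟩ := isCompact_Icc.exists_bound_of_continuousOn hg'_cont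
  have hK0 : 0 ≤ K := (norm_nonneg _).trans (hK 0 ⟨le_rfl, hwbar.le⟩)
  have hnev : (Icc 0 vbar).Nonempty := nonempty_Icc.2 hvbar.le
  obtain ⟨y₁, hy₁, hfmin⟩ := isCompact_Icc.exists_isMinOn hnev hf_cont
  obtain ⟨y₂, hy₂, hfmax⟩ := isCompact_Icc.exists_isMaxOn hnev hf_cont
  have hfi : ∀ v ∈ Icc 0 vbar, IntervalIntegrable f volume 0 v := fun v hv =>
    (hf_cont.mono (Icc_subset_Icc_right hv.2)).intervalIntegrable_of_Icc hv.1
  have hF_pos : ∀ v ∈ Ioc 0 vbar, 0 < F v := fun v hv => by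
    rw [hF]
    exact intervalIntegral.intervalIntegral_pos_of_pos_on (hfi v ⟨hv.1.le, hv.2⟩)
      (fun x hx => hf_pos x ⟨hx.1.le, hx.2.le.trans hv.2⟩) hv.1
  have hF_le : ∀ v ∈ Ioc 0 vbar, F v ≤ f y₂ * v := fun v hv => by
    rw [hF]
    have := intervalIntegral.integral_mono_on (g := fun _ => f y₂) hv.1.le
      (hfi v ⟨hv.1.le, hv.2⟩) intervalIntegrable_const
      (fun x hx => hfmax ⟨hx.1, hx.2.trans hv.2⟩)
    rw [intervalIntegral.integral_const, smul_eq_mul] at this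
    linarith
  have hN' : (1:ℝ) ≤ (N:ℝ) - 1 := by
    have : (2:ℝ) ≤ N := by exact_mod_cast hN
    linarith
  have hμI : ∀ v ∈ Ioc 0 vbar, v ∈ Icc 0 μ := fun v hv => ⟨hv.1.le, hv.2.trans hμv⟩
  have hWI : wbar ∈ Icc 0 wbar := ⟨hwbar.le, le_rfl⟩
  have hset : Setup wbar vbar (g x₁) (g x₂) K (f y₁ / f y₂) gt Gt S
      (fun v => (N - 1 : ℝ) * (f v / F v)) Ψ :=
    { W_pos := hwbar
      T_pos := hvbar
      m_pos := hg_pos _ hx₁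
      m_le := fun x => hmin (clamp_mem hwbar x)
      le_M := fun x => hmax (clamp_mem hwbar x)
      lip := fun x y => (Convex.norm_image_sub_le_of_norm_hasDerivWithin_le hg' hK
          (convex_Icc 0 wbar) (clamp_mem hwbar y) (clamp_mem hwbar x)).trans
        (mul_le_mul_of_nonneg_left (abs_clamp_sub_le wbar x y) hK0)
      derivG := fun x => (hgtc.integral_hasStrictDerivAt 0 x).hasDerivAt
      derivS := fun x =>
        ((continuous_id.mul hgtc).integral_hasStrictDerivAt 0 x).hasDerivAt
      G_zero := by simp [hGt]
      S_zero := by simp [hS]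
      T_le := by
        rw [hGt_eq _ hWI, hG, hg_int, hS_eq _ hWI, ← hμ, mul_one]
        exact hμv
      r_cont := by
        have hFc : ContinuousOn F (Icc 0 vbar) := by
          have h1 : ContinuousOn (fun v => ∫ ξ in (0:ℝ)..v, f ξ) (uIcc 0 vbar) :=
            intervalIntegral.continuousOn_primitive_interval (by
              rw [uIcc_of_le hvbar.le]
              exact hf_cont.integrableOn_Icc)
          rw [uIcc_of_le hvbar.le] at h1
          exact h1.congr fun v _ => hF v
        exact continuousOn_const.mul ((hf_cont.mono Ioc_subset_Icc_self).div
          (hFc.mono Ioc_subset_Icc_self) fun v hv => (hF_pos v hv).ne')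
      ρ_pos := div_pos (hf_pos _ hy₁) (hf_pos _ hy₂)
      r_ge := by
        intro v hv
        have h1 : f y₁ / f y₂ / v ≤ f v / F v := by
          rw [div_div]
          exact div_le_div₀ (hf_pos v ⟨hv.1.le, hv.2⟩).le (hfmin ⟨hv.1.le, hv.2⟩) (hF_pos v hv)
            (hF_le v hv)
        have h2 : 0 < f v / F v := div_pos (hf_pos v ⟨hv.1.le, hv.2⟩) (hF_pos v hv)
        nlinarith
      c_mem := by
        intro v hv
        obtain ⟨h1, h2⟩ := hΨr v (hμI v hv)
        refine ⟨lt_of_le_of_ne h1.1 fun h0 => ?_, h1.2⟩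
        rw [← h0, hΦ0] at h2
        exact hv.1.ne h2
      c_eq := by
        intro v hv
        obtain ⟨h1, h2⟩ := hΨr v (hμI v hv)
        have := hΦ_eq _ h1
        rw [h2] at this
        rw [this, sub_self] }
  obtain ⟨b, hmono, hcont, hb0, hb⟩ := hset.exists_bid
  refine ⟨b, hmono, hcont, hb0, fun v hv => ?_⟩
  obtain ⟨hd, hvb, hbW, hbΨ⟩ := hb v hv
  have hbI : b v ∈ Icc 0 wbar := ⟨(hv.1.trans hvb).le, hbW⟩
  refine ⟨?_, hvb, hbΨ⟩
  rw [hH v hv (b v) ⟨hvb, hbΨ⟩]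
  convert hd using 1
  rw [← hΦ_eq _ hbI, hgt_eq _ hbI, hGt_eq _ hbI, ← sub_mul]
  have h1 := (hg_pos _ hbI).ne'
  have h2 := (sub_pos.2 hvb).ne'
  have h3 := (hF_pos v hv).ne'
  field_simp
end

section
/- Let b̂ : [0,v̄] → ℝ be continuous with b̂(0) = 0, differentiable on (0,v̄] with b̂'(v) = H(b̂(v), v) and v < b̂(v) < Φ⁻¹(v) for all v ∈ (0,v̄]. Then for every v ∈ [0,v̄]: (i) for every ṽ ∈ [0,v̄], F(v)^{N−1}·∫₀^{b̂(v)} (v−ξ)g(ξ)dξ ≥ F(ṽ)^{N−1}·∫₀^{b̂(ṽ)} (v−ξ)g(ξ)dξ (reporting one's true value is optimal); and (ii) for every β > b̂(v̄), F(v)^{N−1}·∫₀^{b̂(v)} (v−ξ)g(ξ)dξ ≥ ∫₀^{min(β,w̄)} (v−ξ)g(ξ)dξ (bidding above b̂(v̄) is suboptimal). -/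
/-!
Fix the true value `v` and write `G b = ∫₀^b g`, `K b = ∫₀^b ξ g ξ dξ`, so that `Φ = K / G` and the
payoff from reporting `t` is `U t = F(t)^(N-1) * (v * G (b̂ t) - K (b̂ t))`. Substituting the
differential equation for `b̂` into `U'` gives
`U' t = (N-1) F(t)^(N-2) f(t) * (v - t) * (b̂ G(b̂) - K(b̂)) / (b̂ - t)` (`payoff_deriv_identity`).
Since `b G(b) - K(b) = ∫₀^b (b - ξ) g ξ dξ ≥ 0` and `b̂ t > t`, the derivative has the sign of
`v - t`: `U` increases on `[0, v]` and decreases on `[v, v̄]`, so `t = v` is optimal. Bidding above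
`b̂ v̄` compares with reporting `v̄`, where `F v̄ = 1`: because `b̂ v̄ > v̄ ≥ v`, the extra part of the
integral has a nonpositive integrand.
-/

open MeasureTheory intervalIntegral Set Filter

lemma hasDerivAt_primitive {h : ℝ → ℝ} {a x : ℝ} (hc : ContinuousOn h (Icc 0 a))
    (hx : x ∈ Ioo 0 a) : HasDerivAt (fun b => ∫ ξ in (0:ℝ)..b, h ξ) (h x) x := by
  have hnhds : Icc 0 a ∈ nhds x := Icc_mem_nhds hx.1 hx.2
  refine integral_hasDerivAt_right ?_ ?_ (hc.continuousAt hnhds)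
  · refine ContinuousOn.intervalIntegrable_of_Icc hx.1.le (hc.mono ?_)
    exact Icc_subset_Icc_right hx.2.le
  · exact (hc.mono Ioo_subset_Icc_self).stronglyMeasurableAtFilter isOpen_Ioo x hx

lemma continuousOn_primitive_Icc {h : ℝ → ℝ} {a : ℝ} (ha : 0 ≤ a)
    (hc : ContinuousOn h (Icc 0 a)) :
    ContinuousOn (fun b => ∫ ξ in (0:ℝ)..b, h ξ) (Icc 0 a) := by
  have h1 : IntegrableOn h (uIcc 0 a) := by
    rw [uIcc_of_le ha]; exact hc.integrableOn_Icc
  have := continuousOn_primitive_interval h1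
  rwa [uIcc_of_le ha] at this

/-- The first-order identity: once the slope `d` of the bid function is given by the differential
equation, the derivative of the payoff factors with `v - t` as the only term of varying sign. -/
lemma payoff_deriv_identity (m : ℕ) {v t b d ft Ft gb Gb Kb Pb : ℝ} (hF : Ft ≠ 0) (hg : gb ≠ 0)
    (hP : Gb * Pb = Kb) (hbt : b - t ≠ 0)
    (hd : d = ((m : ℝ) + 1) * (ft / Ft) * (Gb / gb) * ((t - Pb) / (b - t))) :
    (((m : ℝ) + 1) * Ft ^ m * ft) * (v * Gb - Kb)
        + Ft ^ (m + 1) * (v * (gb * d) - b * gb * d)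
      = ((m : ℝ) + 1) * Ft ^ m * ft * (b * Gb - Kb) / (b - t) * (v - t) := by
  subst hP hd
  field_simp
  ring

/-- Let `b̂ : [0, v̄] → ℝ` be continuous with `b̂ 0 = 0`, differentiable on
`(0, v̄]` with `b̂'(v) = H (b̂ v) v` and `v < b̂ v < Φ⁻¹ v` there. Then for every
`v ∈ [0, v̄]`: (i) for every reported value `vtil ∈ [0, v̄]`,
`F(v)^{N−1} ∫₀^{b̂ v} (v−ξ) g ξ dξ ≥ F(vtil)^{N−1} ∫₀^{b̂ vtil} (v−ξ) g ξ dξ`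
(reporting one's true value is optimal); and (ii) for every bid `β > b̂ v̄`,
`F(v)^{N−1} ∫₀^{b̂ v} (v−ξ) g ξ dξ ≥ ∫₀^{min β w̄} (v−ξ) g ξ dξ`
(bidding above `b̂ v̄` is suboptimal). -/
theorem stmt7
    (wbar vbar : ℝ) (hwbar : 0 < wbar) (hvbar : 0 < vbar)
    (g : ℝ → ℝ)
    (hg_cont : ContinuousOn g (Set.Icc 0 wbar))
    (hg_pos : ∀ x ∈ Set.Icc 0 wbar, 0 < g x)
    (hg_int : (∫ ξ in (0:ℝ)..wbar, g ξ) = 1)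
    (G : ℝ → ℝ) (hG : ∀ b, G b = ∫ ξ in (0:ℝ)..b, g ξ)
    (Φ : ℝ → ℝ) (hΦ0 : Φ 0 = 0)
    (hΦ : ∀ b ∈ Set.Ioc 0 wbar, Φ b = (∫ ξ in (0:ℝ)..b, ξ * g ξ) / G b)
    (f : ℝ → ℝ)
    (hf_cont : ContinuousOn f (Set.Icc 0 vbar))
    (hf_pos : ∀ x ∈ Set.Icc 0 vbar, 0 < f x)
    (hf_int : (∫ ξ in (0:ℝ)..vbar, f ξ) = 1)
    (F : ℝ → ℝ) (hF : ∀ v, F v = ∫ ξ in (0:ℝ)..v, f ξ)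
    (N : ℕ) (hN : 2 ≤ N)
    (μ : ℝ) (hμ : μ = ∫ ξ in (0:ℝ)..wbar, ξ * g ξ) (hμv : vbar ≤ μ)
    (Ψ : ℝ → ℝ)
    (hΨl : ∀ b ∈ Set.Icc 0 wbar, Ψ (Φ b) = b)
    (hΨr : ∀ ξ ∈ Set.Icc 0 μ, Ψ ξ ∈ Set.Icc 0 wbar ∧ Φ (Ψ ξ) = ξ)
    (H : ℝ → ℝ → ℝ)
    (hH : ∀ v ∈ Set.Ioc 0 vbar, ∀ b ∈ Set.Ioo v (Ψ v),
      H b v = (N - 1 : ℝ) * (f v / F v) * (G b / g b) * ((v - Φ b) / (b - v)))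
    (bhat : ℝ → ℝ)
    (hb_cont : ContinuousOn bhat (Set.Icc 0 vbar))
    (hb0 : bhat 0 = 0)
    (hb_ode : ∀ v ∈ Set.Ioc 0 vbar,
      HasDerivWithinAt bhat (H (bhat v) v) (Set.Icc 0 vbar) v ∧
      v < bhat v ∧ bhat v < Ψ v) :
    ∀ v ∈ Set.Icc 0 vbar,
      (∀ vtil ∈ Set.Icc 0 vbar,
        F vtil ^ (N - 1) * ∫ ξ in (0:ℝ)..(bhat vtil), (v - ξ) * g ξ ≤
        F v ^ (N - 1) * ∫ ξ in (0:ℝ)..(bhat v), (v - ξ) * g ξ) ∧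
      (∀ β, bhat vbar < β →
        (∫ ξ in (0:ℝ)..(min β wbar), (v - ξ) * g ξ) ≤
        F v ^ (N - 1) * ∫ ξ in (0:ℝ)..(bhat v), (v - ξ) * g ξ) := by
  obtain ⟨m, rfl⟩ : ∃ m, N = m + 2 := ⟨N - 2, by omega⟩
  have hNm : m + 2 - 1 = m + 1 := by omega
  have hK_cont : ContinuousOn (fun ξ => ξ * g ξ) (Icc 0 wbar) := continuousOn_id.mul hg_cont
  set K : ℝ → ℝ := fun b => ∫ ξ in (0:ℝ)..b, ξ * g ξ with hKdef
  have hGfun : G = fun b => ∫ ξ in (0:ℝ)..b, g ξ := funext hG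
  have hFfun : F = fun b => ∫ ξ in (0:ℝ)..b, f ξ := funext hF
  have hint : ∀ {h : ℝ → ℝ}, ContinuousOn h (Icc 0 wbar) → ∀ a ∈ Icc 0 wbar, ∀ b ∈ Icc 0 wbar,
      IntervalIntegrable h volume a b := fun hc a ha b hb =>
    (hc.mono (ordConnected_Icc.uIcc_subset ha hb)).intervalIntegrable
  have h0w : (0:ℝ) ∈ Icc 0 wbar := ⟨le_rfl, hwbar.le⟩
  have hpay : ∀ v, ∀ b ∈ Icc 0 wbar,
      (∫ ξ in (0:ℝ)..b, (v - ξ) * g ξ) = v * G b - K b := by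
    intro v b hb
    simp only [sub_mul, hG, hKdef]
    rw [integral_sub ((hint hg_cont 0 h0w b hb).const_mul v) (hint hK_cont 0 h0w b hb),
      intervalIntegral.integral_const_mul]
  have hbK : ∀ b ∈ Icc 0 wbar, 0 ≤ b * G b - K b := by
    intro b hb
    rw [← hpay b b hb]
    refine integral_nonneg hb.1 fun ξ hξ => mul_nonneg (by linarith [hξ.2]) ?_
    exact (hg_pos ξ ⟨hξ.1, hξ.2.trans hb.2⟩).le
  have hGpos : ∀ b ∈ Ioc 0 wbar, 0 < G b := by
    intro b hb
    rw [hG]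
    refine intervalIntegral_pos_of_pos_on (hint hg_cont 0 h0w b ⟨hb.1.le, hb.2⟩) ?_ hb.1
    exact fun x hx => hg_pos x ⟨hx.1.le, hx.2.le.trans hb.2⟩
  have hFpos : ∀ t ∈ Ioc 0 vbar, 0 < F t := by
    intro t ht
    rw [hF]
    refine intervalIntegral_pos_of_pos_on ?_ ?_ ht.1
    · exact (hf_cont.mono (Icc_subset_Icc_right ht.2)).intervalIntegrable_of_Icc ht.1.le
    · exact fun x hx => hf_pos x ⟨hx.1.le, hx.2.le.trans ht.2⟩
  have hb_mem : ∀ t ∈ Ioc 0 vbar, bhat t ∈ Ioo 0 wbar := by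
    intro t ht
    obtain ⟨-, h1, h2⟩ := hb_ode t ht
    exact ⟨ht.1.trans h1, h2.trans_le (hΨr t ⟨ht.1.le, ht.2.trans hμv⟩).1.2⟩
  have hb_memc : ∀ t ∈ Icc 0 vbar, bhat t ∈ Icc 0 wbar := by
    intro t ht
    rcases ht.1.eq_or_lt with rfl | h
    · rw [hb0]; exact h0w
    · exact Ioo_subset_Icc_self (hb_mem t ⟨h, ht.2⟩)
  intro v hv
  rw [hNm]
  let U : ℝ → ℝ := fun t => F t ^ (m + 1) * (v * G (bhat t) - K (bhat t))
  have hUcont : ContinuousOn U (Icc 0 vbar) := by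
    have hGc : ContinuousOn G (Icc 0 wbar) := hGfun ▸ continuousOn_primitive_Icc hwbar.le hg_cont
    have hKc : ContinuousOn K (Icc 0 wbar) := continuousOn_primitive_Icc hwbar.le hK_cont
    have hFc : ContinuousOn F (Icc 0 vbar) := hFfun ▸ continuousOn_primitive_Icc hvbar.le hf_cont
    exact (hFc.pow _).mul
      ((continuousOn_const.mul (hGc.comp hb_cont hb_memc)).sub (hKc.comp hb_cont hb_memc))
  have hUderiv : ∀ t ∈ Ioo 0 vbar, ∃ c, 0 ≤ c ∧ HasDerivAt U (c * (v - t)) t := by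
    intro t ht
    have ht' : t ∈ Ioc 0 vbar := ⟨ht.1, ht.2.le⟩
    obtain ⟨hd, h1, h2⟩ := hb_ode t ht'
    have hbm := hb_mem t ht'
    have hGb := hGpos _ ⟨hbm.1, hbm.2.le⟩
    have hFt := hFpos t ht'
    have hgb := hg_pos _ (Ioo_subset_Icc_self hbm)
    have hft := hf_pos t ⟨ht.1.le, ht.2.le⟩
    have hbt : 0 < bhat t - t := sub_pos.2 h1
    have hd' := hd.hasDerivAt (Icc_mem_nhds ht.1 ht.2)
    have hG' : HasDerivAt G (g (bhat t)) (bhat t) := hGfun ▸ hasDerivAt_primitive hg_cont hbm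
    have hK' : HasDerivAt K (bhat t * g (bhat t)) (bhat t) := hasDerivAt_primitive hK_cont hbm
    have hF' : HasDerivAt F (f t) t := hFfun ▸ hasDerivAt_primitive hf_cont ht
    have hU := (hF'.pow (m + 1)).mul (((hG'.comp t hd').const_mul v).sub (hK'.comp t hd'))
    have hP : G (bhat t) * Φ (bhat t) = K (bhat t) := by
      rw [hΦ _ ⟨hbm.1, hbm.2.le⟩]
      field_simp
      rfl
    have hH' : H (bhat t) t = ((m : ℝ) + 1) * (f t / F t) * (G (bhat t) / g (bhat t)) *
        ((t - Φ (bhat t)) / (bhat t - t)) := by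
      rw [hH t ht' (bhat t) ⟨h1, h2⟩]
      push_cast
      ring
    refine ⟨((m : ℝ) + 1) * F t ^ m * f t * (bhat t * G (bhat t) - K (bhat t)) / (bhat t - t),
      ?_, ?_⟩
    · have := hbK _ (Ioo_subset_Icc_self hbm)
      positivity
    · rw [← payoff_deriv_identity m hFt.ne' hgb.ne' hP hbt.ne' hH']
      refine hU.congr_deriv ?_
      simp
  have hle : ∀ t ∈ Icc 0 vbar, U t ≤ U v := by
    intro t ht
    rcases le_total t v with htv | hvt
    · refine monotoneOn_of_deriv_nonneg (convex_Icc 0 v)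
        (hUcont.mono (Icc_subset_Icc_right hv.2)) ?_ ?_ ⟨ht.1, htv⟩ ⟨hv.1, le_rfl⟩ htv
      all_goals
        rw [interior_Icc]
        intro s hs
        obtain ⟨c, hc, hd⟩ := hUderiv s ⟨hs.1, hs.2.trans_le hv.2⟩
      · exact hd.differentiableAt.differentiableWithinAt
      · rw [hd.deriv]
        exact mul_nonneg hc (sub_nonneg.2 hs.2.le)
    · refine antitoneOn_of_deriv_nonpos (convex_Icc v vbar)
        (hUcont.mono (Icc_subset_Icc_left hv.1)) ?_ ?_ ⟨le_rfl, hv.2⟩ ⟨hvt, ht.2⟩ hvt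
      all_goals
        rw [interior_Icc]
        intro s hs
        obtain ⟨c, hc, hd⟩ := hUderiv s ⟨hv.1.trans_lt hs.1, hs.2⟩
      · exact hd.differentiableAt.differentiableWithinAt
      · rw [hd.deriv]
        exact mul_nonpos_of_nonneg_of_nonpos hc (sub_nonpos.2 hs.1.le)
  have hUeq : ∀ t ∈ Icc 0 vbar,
      F t ^ (m + 1) * (∫ ξ in (0:ℝ)..(bhat t), (v - ξ) * g ξ) = U t := fun t ht => by
    rw [hpay v _ (hb_memc t ht)]
  refine ⟨fun t ht => ?_, fun β hβ => ?_⟩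
  · rw [hUeq t ht, hUeq v hv]
    exact hle t ht
  · have hvb : vbar ∈ Icc 0 vbar := ⟨hvbar.le, le_rfl⟩
    rw [hUeq v hv]
    refine le_trans ?_ (hle vbar hvb)
    rw [← hUeq vbar hvb, hF vbar, hf_int, one_pow, one_mul]
    have hbm := hb_mem vbar ⟨hvbar, le_rfl⟩
    have hvlt := (hb_ode vbar ⟨hvbar, le_rfl⟩).2.1
    have hmin : bhat vbar ≤ min β wbar := le_min hβ.le hbm.2.le
    have hmin_mem : min β wbar ∈ Icc 0 wbar := ⟨hbm.1.le.trans hmin, min_le_right _ _⟩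
    have hc : ContinuousOn (fun ξ => (v - ξ) * g ξ) (Icc 0 wbar) :=
      (continuousOn_const.sub continuousOn_id).mul hg_cont
    rw [← integral_add_adjacent_intervals (hint hc 0 h0w _ (hb_memc vbar hvb))
      (hint hc _ (hb_memc vbar hvb) _ hmin_mem)]
    have hneg : (∫ ξ in (bhat vbar)..(min β wbar), (v - ξ) * g ξ) ≤ 0 := by
      rw [← neg_nonneg, ← intervalIntegral.integral_neg]
      refine intervalIntegral.integral_nonneg hmin fun ξ hξ => neg_nonneg.2 ?_
      refine mul_nonpos_of_nonpos_of_nonneg (by linarith [hξ.1, hv.2]) ?_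
      exact (hg_pos ξ ⟨hbm.1.le.trans hξ.1, hξ.2.trans hmin_mem.2⟩).le
    linarith
end

section
/- Let P : [0,∞) → (0,∞) be nondecreasing and let b : [0,v̄] → [0,w̄] be a function such that for all v, v' ∈ [0,v̄]: P(b(v))·∫₀^{b(v)} (v−ξ)g(ξ)dξ ≥ P(b(v'))·∫₀^{b(v')} (v−ξ)g(ξ)dξ. Then b is nondecreasing on [0,v̄]. -/
/-! Write `G β = ∫₀^β g` and `A β = P β * G β`. The payoff of bid `β` at value `v` is
`v * A β - C β`, with `C` not depending on `v`, so adding the two optimality inequalities for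
values `x` and `y` gives `(x - y) * (A (b x) - A (b y)) ≥ 0`. As `g > 0` and `P` is positive and
nondecreasing, `A` is strictly increasing on `[0, wbar]`, hence `x < y` forces `b x ≤ b y`. -/

open MeasureTheory intervalIntegral Set Filter

/-- Let `P : [0,∞) → (0,∞)` be nondecreasing and let
`b : [0, v̄] → [0, w̄]` satisfy, for all `v, v' ∈ [0, v̄]`,
`P(b v) ∫₀^{b v} (v−ξ) g ξ dξ ≥ P(b v') ∫₀^{b v'} (v−ξ) g ξ dξ`
(each bid `b v` is optimal for value `v` among all bids `b v'`). Then `b` is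
nondecreasing on `[0, v̄]`. -/
theorem stmt9
    (wbar vbar : ℝ) (hwbar : 0 < wbar) (hvbar : 0 < vbar)
    (g : ℝ → ℝ)
    (hg_cont : ContinuousOn g (Set.Icc 0 wbar))
    (hg_pos : ∀ x ∈ Set.Icc 0 wbar, 0 < g x)
    (hg_int : (∫ ξ in (0:ℝ)..wbar, g ξ) = 1)
    (P : ℝ → ℝ)
    (hP_pos : ∀ x, 0 ≤ x → 0 < P x)
    (hP_mono : MonotoneOn P (Set.Ici 0))
    (b : ℝ → ℝ)
    (hb_range : ∀ v ∈ Set.Icc 0 vbar, b v ∈ Set.Icc 0 wbar)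
    (hopt : ∀ v ∈ Set.Icc 0 vbar, ∀ v' ∈ Set.Icc 0 vbar,
      P (b v') * ∫ ξ in (0:ℝ)..(b v'), (v - ξ) * g ξ ≤
      P (b v) * ∫ ξ in (0:ℝ)..(b v), (v - ξ) * g ξ) :
    MonotoneOn b (Set.Icc 0 vbar) := by
  have hint : ∀ s ∈ Icc 0 wbar, ∀ t ∈ Icc 0 wbar, ∀ f : ℝ → ℝ, ContinuousOn f (Icc 0 wbar) →
      IntervalIntegrable f volume s t := fun s hs t ht f hf =>
    (hf.mono (uIcc_subset_Icc hs ht)).intervalIntegrable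
  have h0 : (0 : ℝ) ∈ Icc 0 wbar := ⟨le_rfl, hwbar.le⟩
  have hsplit : ∀ v, ∀ β ∈ Icc 0 wbar, (∫ ξ in (0:ℝ)..β, (v - ξ) * g ξ) =
      v * (∫ ξ in (0:ℝ)..β, g ξ) - ∫ ξ in (0:ℝ)..β, ξ * g ξ := by
    intro v β hβ
    rw [← intervalIntegral.integral_const_mul, ← intervalIntegral.integral_sub
      (hint 0 h0 β hβ (fun ξ => v * g ξ) (continuousOn_const.mul hg_cont))
      (hint 0 h0 β hβ (fun ξ => ξ * g ξ) (continuousOn_id.mul hg_cont))]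
    simp only [sub_mul]
  have hG_lt : ∀ s ∈ Icc 0 wbar, ∀ t ∈ Icc 0 wbar, s < t →
      (∫ ξ in (0:ℝ)..s, g ξ) < ∫ ξ in (0:ℝ)..t, g ξ := by
    intro s hs t ht hst
    have hadd := intervalIntegral.integral_add_adjacent_intervals
      (hint 0 h0 s hs g hg_cont) (hint s hs t ht g hg_cont)
    have hpos : 0 < ∫ ξ in s..t, g ξ :=
      intervalIntegral.intervalIntegral_pos_of_pos_on (hint s hs t ht g hg_cont)
        (fun x hx => hg_pos x ⟨hs.1.trans hx.1.le, hx.2.le.trans ht.2⟩) hst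
    linarith
  have hG_nonneg : ∀ t ∈ Icc 0 wbar, 0 ≤ ∫ ξ in (0:ℝ)..t, g ξ := fun t ht =>
    intervalIntegral.integral_nonneg ht.1 fun x hx => (hg_pos x ⟨hx.1, hx.2.trans ht.2⟩).le
  intro x hx y hy hxy
  rcases hxy.eq_or_lt with rfl | hlt
  · exact le_rfl
  by_contra! hb
  have hbx := hb_range x hx
  have hby := hb_range y hy
  have h1 := hopt x hx y hy
  have h2 := hopt y hy x hx
  rw [hsplit _ _ hbx, hsplit _ _ hby] at h1 h2
  have hA : P (b y) * (∫ ξ in (0:ℝ)..(b y), g ξ) < P (b x) * ∫ ξ in (0:ℝ)..(b x), g ξ :=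
    (mul_lt_mul_of_pos_left (hG_lt _ hby _ hbx hb) (hP_pos _ hby.1)).trans_le
      (mul_le_mul_of_nonneg_right (hP_mono hby.1 hbx.1 hb.le) (hG_nonneg _ hbx))
  -- The sum of the two optimality inequalities contradicts this product.
  have h3 := mul_pos (sub_pos.2 hlt) (sub_pos.2 hA)
  linarith
end
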